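/- arXiv:2105.07034 — 2 statements merged into one kernel-verified Lean document; each statement's English description precedes it below -/
import Mathlib

section
/- Let K_6^{(3)} denote the complete 3-uniform hypergraph on 6 vertices. Then, for the semi-random hypergraph process with s = 3 and r = 2, τ^{(2)}_{P_{K_6^{(3)}}} ≤ 9/5. -/
open Filter
open scoped ENNReal

namespace SemiRandomHypergraph

/-- The collection of `k`-element subsets of `Fin n`. -/
abbrev Col (n k : ℕ) := {A : Finset (Fin n) // A.card = k}

lemma col_nonempty {n k : ℕ} (h : k ≤ n) : Nonempty (Col n k) := by
  obtain ⟨t, -, ht⟩ :=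
    Finset.exists_subset_card_eq (show k ≤ (Finset.univ : Finset (Fin n)).card by simpa using h)
  exact ⟨⟨t, ht⟩⟩

/-- One round of the semi-random `(r,s)`-hypergraph process: the random `r`-set `U_t`
together with the player's reply, an `(s-r)`-set `V_t` (which may overlap `U_t`). -/
abbrev Step (n r s : ℕ) := Col n r × Col n (s - r)

/-- A strategy of the player: given the history so far (most recent round first) and the
current random `r`-set `U_t`, a probability distribution for the reply `V_t`. -/
def Strategy (n r s : ℕ) := List (Step n r s) → Col n r → PMF (Col n (s - r))

/-- The distribution of the history (most recent round first) after `t` rounds of the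
semi-random hypergraph process played with strategy `S`. -/
noncomputable def historyPMF {n r s : ℕ} (h : Nonempty (Col n r)) (S : Strategy n r s) :
    ℕ → PMF (List (Step n r s))
  | 0 => PMF.pure []
  | t + 1 =>
      (historyPMF h S t).bind fun hist =>
        (@PMF.uniformOfFintype (Col n r) _ h).bind fun U =>
          (S hist U).map fun W => (U, W) :: hist

/-- The multi-hypergraph `H_t^{(r,s)}` (recorded by its history `hist`; the edge created
in a round is the multiset `U_t + V_t`) contains a sub-hypergraph isomorphic to the
hypergraph with edge set `E`. -/
def ContainsCopy {V : Type*} {n r s : ℕ} (E : Finset (Finset V))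
    (hist : List (Step n r s)) : Prop :=
  ∃ φ : V ↪ Fin n, ∀ e ∈ E, ∃ p ∈ hist,
    Multiset.map (φ : V → Fin n) e.val = p.1.1.val + p.2.1.val

/-- The probability that after `t` rounds the multi-hypergraph `H_t^{(r,s)}` built with
strategy `S` contains a copy of the hypergraph with edge set `E`. -/
noncomputable def probContains {V : Type*} (n r s : ℕ) (E : Finset (Finset V))
    (S : Strategy n r s) (t : ℕ) : ℝ≥0∞ :=
  if h : r ≤ n then
    (historyPMF (col_nonempty h) S t).toOuterMeasure {hist | ContainsCopy E hist}
  else 0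

/-- `τ^{(r)}_{P_G}(q, n)`: the least number of rounds needed so that some strategy makes
the probability of containing a copy of `G` at least `q` (`⊤` if impossible). -/
noncomputable def tauQ {V : Type*} (r s : ℕ) (E : Finset (Finset V)) (q : ℝ≥0∞)
    (n : ℕ) : ℕ∞ :=
  ⨅ S : Strategy n r s,
    sInf {c : ℕ∞ | ∃ t : ℕ, c = (t : ℕ∞) ∧ q ≤ probContains n r s E S t}

/-- Logarithm on `ℕ∞`, with `log ⊤ = ⊤`, valued in `EReal`. -/
noncomputable def elog (m : ℕ∞) : EReal :=
  WithTop.recTopCoe ⊤ (fun t : ℕ => ((Real.log t : ℝ) : EReal)) m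

/-- `τ^{(r)}_{P_G} = lim_{q→1⁻} limsup_{n→∞} ln(τ^{(r)}_{P_G}(q,n)) / ln n`; since
`q ↦ limsup_n …` is non-decreasing, the limit as `q → 1⁻` equals the supremum over
`q ∈ (0,1)`. -/
noncomputable def tauExp {V : Type*} (r s : ℕ) (E : Finset (Finset V)) : EReal :=
  ⨆ q ∈ Set.Ioo (0 : ℝ≥0∞) 1,
    Filter.limsup
      (fun n : ℕ => elog (tauQ r s E q n) * (((Real.log n)⁻¹ : ℝ) : EReal)) atTop

/-- The hypergraph with edge set `E` is `d`-degenerate: every (induced, hence every)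
sub-hypergraph has a vertex of degree at most `d`. -/
def Degen {V : Type*} [DecidableEq V] (E : Finset (Finset V)) (d : ℕ) : Prop :=
  ∀ S : Finset V, S.Nonempty → ∃ v ∈ S, (E.filter fun e => v ∈ e ∧ e ⊆ S).card ≤ d

/-- The hypergraph with edge set `E` has degeneracy exactly `d`. -/
def DegeneracyEq {V : Type*} [DecidableEq V] (E : Finset (Finset V)) (d : ℕ) : Prop :=
  Degen E d ∧ ∀ d' : ℕ, Degen E d' → d ≤ d'

end SemiRandomHypergraph


namespace K6Bound

set_option linter.unusedSectionVars false

/-- roles -/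
def tri : Fin 20 → Fin 6 × Fin 6 × Fin 6 :=
  ![(0,4,5),(1,4,5),(2,4,5),(3,4,5),
    (0,1,4),(0,2,4),(0,3,4),(1,2,4),(1,3,4),(2,3,4),
    (0,1,5),(0,2,5),(0,3,5),(1,2,5),(1,3,5),(2,3,5),
    (0,1,2),(0,1,3),(0,2,3),(1,2,3)]

def supp (ρ : Fin 20) : Finset (Fin 4) :=
  Finset.univ.filter fun i => i.val = (tri ρ).1.val ∨ i.val = (tri ρ).2.1.val

set_option maxRecDepth 100000 in
set_option maxHeartbeats 4000000 in
lemma supp_bound : ∀ S : Finset (Fin 4),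
    (Finset.univ.filter fun ρ : Fin 20 => supp ρ ⊆ S).card ≤ 5 * S.card := by decide

set_option maxRecDepth 100000 in
set_option maxHeartbeats 4000000 in
lemma supp_bound' : ∀ S : Finset (Fin 4), S ≠ Finset.univ →
    (∃ ρ : Fin 20, 16 ≤ ρ.val ∧ supp ρ ⊆ S) →
    (Finset.univ.filter fun ρ : Fin 20 => 16 ≤ ρ.val ∨ supp ρ ⊆ S).card + 2 ≤ 5 * S.card := by
  decide

set_option maxRecDepth 100000 in
set_option maxHeartbeats 4000000 in
lemma tri_edges : ∀ e ∈ Finset.powersetCard 3 (Finset.univ : Finset (Fin 6)),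
    ∃ ρ : Fin 20, e = {(tri ρ).1, (tri ρ).2.1, (tri ρ).2.2} := by decide

lemma tri_ne : ∀ ρ : Fin 20, (tri ρ).1 ≠ (tri ρ).2.1 ∧ (tri ρ).1 ≠ (tri ρ).2.2 ∧ 
   (tri ρ).2.1 ≠ (tri ρ).2.2 := by decide

lemma tri_fixed : ∀ ρ : Fin 20, ρ.val < 16 → 4 ≤ (tri ρ).2.2.val := by decide

section window
variable {P : Type*} [Fintype P] [DecidableEq P] {L : ℕ}

open Classical in
noncomputable def w (e : P) (g : Fin L → P) : ℝ := if ∃ j, g j = e then 1 else 0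

/-- miss indicator -/
lemma w_eq (e : P) (g : Fin L → P) : w e g = 1 - ∏ j, (if g j = e then (0:ℝ) else 1) := by
  unfold w
  by_cases h : ∃ j, g j = e
  · obtain ⟨j, hj⟩ := h
    rw [if_pos ⟨j, hj⟩, Finset.prod_eq_zero (Finset.mem_univ j) (by simp [hj])]; simp
  · rw [if_neg h]
    push Not at h
    simp [h]

lemma sum_prod (F : P → ℝ) : ∑ g : Fin L → P, ∏ j, F (g j) = (∑ a, F a) ^ L := by
  have := Finset.prod_univ_sum (fun _ : Fin L => (Finset.univ : Finset P)) (fun _ a => F a)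
  simp only [Fintype.piFinset_univ] at this
  rw [← this]; simp

noncomputable def pp (P : Type*) [Fintype P] (L : ℕ) : ℝ := 1 - (1 - 1 / (Fintype.card P : ℝ)) ^ L

lemma sum_miss (e : P) : ∑ a : P, (if a = e then (0:ℝ) else 1) = Fintype.card P - 1 := by
  have : ∀ a : P, (if a = e then (0:ℝ) else 1) = 1 - (if a = e then 1 else 0) := by
    intro a; split_ifs <;> simp
  simp [this]

lemma sum_w (e : P) : ∑ g : Fin L → P, w e g = pp P L * (Fintype.card P : ℝ) ^ L := by
  have hP : (Fintype.card P : ℝ) ≠ 0 := by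
    have : 0 < Fintype.card P := Fintype.card_pos_iff.mpr ⟨e⟩
    positivity
  simp only [w_eq, Finset.sum_sub_distrib, sum_prod (fun a => if a = e then (0:ℝ) else 1), sum_miss]
  rw [pp, sub_mul, ← mul_pow, sub_mul, div_mul_cancel₀ _ hP]
  simp

lemma w_sq (e : P) (g : Fin L → P) : w e g * w e g = w e g := by
  unfold w; split_ifs <;> simp

lemma w_nonneg (e : P) (g : Fin L → P) : 0 ≤ w e g := by
  unfold w; split_ifs <;> simp

lemma sum_ww (e e' : P) (h : e ≠ e') :
    ∑ g : Fin L → P, w e g * w e' g ≤ (pp P L) ^ 2 * (Fintype.card P : ℝ) ^ L := by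
  have hc : 2 ≤ Fintype.card P := by
    have := Fintype.one_lt_card_iff.mpr ⟨e, e', h⟩
    omega
  have hc' : (2:ℝ) ≤ Fintype.card P := by exact_mod_cast hc
  set M : ℝ := (Fintype.card P : ℝ) with hM
  have key : ∀ g : Fin L → P, w e g * w e' g = 1 - ∏ j, (if g j = e then (0:ℝ) else 1)
      - ∏ j, (if g j = e' then (0:ℝ) else 1) +
        ∏ j, ((if g j = e then (0:ℝ) else 1) * (if g j = e' then (0:ℝ) else 1)) := by
    intro g
    rw [w_eq, w_eq, Finset.prod_mul_distrib]; ring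
  have h2 : ∑ a : P, ((if a = e then (0:ℝ) else 1) * (if a = e' then (0:ℝ) else 1)) = M - 2 := by
    have : ∀ a : P, ((if a = e then (0:ℝ) else 1) * (if a = e' then (0:ℝ) else 1))
        = 1 - (if a = e then 1 else 0) - (if a = e' then 1 else 0) := by
      intro a; split_ifs <;> simp_all
    simp only [this, Finset.sum_sub_distrib]
    simp; linarith
  simp only [key, Finset.sum_add_distrib, Finset.sum_sub_distrib,
    sum_prod (fun a => if a = e then (0:ℝ) else 1), sum_prod (fun a => if a = e' then (0:ℝ) else 1),
    sum_prod (fun a => (if a = e then (0:ℝ) else 1) * (if a = e' then (0:ℝ) else 1)), sum_miss, h2,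
    ← hM]
  have h3 : pp P L * M ^ L = M ^ L - (M - 1) ^ L := by
    rw [pp, sub_mul, ← hM, ← mul_pow, sub_mul, div_mul_cancel₀ _ (by linarith)]
    simp
  have h4 : (M - 2) ^ L * M ^ L ≤ ((M - 1) ^ L) ^ 2 := by
    rw [← mul_pow, ← pow_mul, mul_comm L 2, pow_mul]
    exact pow_le_pow_left₀ (by nlinarith) (by nlinarith) L
  have hp : 0 < M ^ L := by positivity
  have h5 : pp P L ^ 2 * M ^ L * M ^ L = (M ^ L - (M - 1) ^ L) ^ 2 := by
    rw [← h3]; ring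
  have : (∑ g : Fin L → P, (1:ℝ)) = M ^ L := by simp [hM]
  rw [this]
  refine le_of_mul_le_mul_right ?_ hp
  rw [h5]; nlinarith

end window

section moment
variable {P : Type*} [Fintype P] [DecidableEq P] {L N : ℕ}

lemma sum_pi (F : Fin 20 → (Fin L → P) → ℝ) :
    ∑ ω : Fin 20 → Fin L → P, ∏ ρ, F ρ (ω ρ) = ∏ ρ, ∑ g, F ρ g := by
  have := Finset.prod_univ_sum (fun _ : Fin 20 => (Finset.univ : Finset (Fin L → P))) F
  simp only [Fintype.piFinset_univ] at this
  exact this.symm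

def agr (y y' : Fin 4 → Fin N) : Finset (Fin 4) := Finset.univ.filter fun i => y i = y' i

lemma sum_agr (Q : ℝ) (hQ : 0 ≤ Q) : ∑ y : Fin 4 → Fin N, ∑ y' : Fin 4 → Fin N, Q ^ (agr y y').card
    ≤ ((N:ℝ) ^ 2 + N * Q) ^ 4 := by
  have h1 : ∀ y y' : Fin 4 → Fin N, Q ^ (agr y y').card = ∏ i, if y i = y' i then Q else 1 := by
    intro y y'
    rw [agr, Finset.prod_ite]; simp
  have h2 : ∀ y : Fin 4 → Fin N, ∑ y' : Fin 4 → Fin N, Q ^ (agr y y').card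
      = ∏ i, ∑ b, if y i = b then Q else 1 := by
    intro y
    have := Finset.prod_univ_sum (fun _ : Fin 4 => (Finset.univ : Finset (Fin N)))
      (fun i b => if y i = b then Q else 1)
    simp only [Fintype.piFinset_univ] at this
    rw [this]
    exact Finset.sum_congr rfl fun y' _ => h1 y y'
  have h3 : ∑ y : Fin 4 → Fin N, ∏ i, (∑ b, if y i = b then Q else 1)
      = (∑ a : Fin N, ∑ b : Fin N, if a = b then Q else 1) ^ 4 := by
    exact sum_prod (P := Fin N) (L := 4) (fun a => ∑ b, if a = b then Q else 1)
  rw [Finset.sum_congr rfl fun y _ => h2 y, h3]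
  apply pow_le_pow_left₀
  · exact Finset.sum_nonneg fun a _ => Finset.sum_nonneg fun b _ => by split_ifs <;> linarith
  · calc ∑ a : Fin N, ∑ b : Fin N, (if a = b then Q else 1)
        ≤ ∑ a : Fin N, ∑ b : Fin N, ((1:ℝ) + if a = b then Q else 0) := by
          refine Finset.sum_le_sum fun a _ => Finset.sum_le_sum fun b _ => ?_
          split_ifs <;> linarith
      _ = _ := by simp [Finset.sum_add_distrib]; ring

variable (e : Fin 20 → (Fin 4 → Fin N) → P)

lemma prod_bound (c : Fin 20 → Prop) [DecidablePred c] (p D : ℝ) 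
    (f : Fin 20 → ℝ) (hf0 : ∀ ρ, 0 ≤ f ρ) (hf : ∀ ρ, f ρ ≤ p ^ 2 * (if c ρ then p⁻¹ else 1) * D) :
    ∏ ρ, f ρ ≤ p ^ 40 * p⁻¹ ^ (Finset.univ.filter c).card * D ^ 20 := by
  calc ∏ ρ, f ρ ≤ ∏ ρ, (p ^ 2 * (if c ρ then p⁻¹ else 1) * D) :=
        Finset.prod_le_prod (fun ρ _ => hf0 ρ) (fun ρ _ => hf ρ)
    _ = _ := by
        rw [Finset.prod_mul_distrib, Finset.prod_mul_distrib, Finset.prod_ite]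
        simp
        left; left; ring

noncomputable def XX (ω : Fin 20 → Fin L → P) : ℝ := ∑ y, ∏ ρ, w (e ρ y) (ω ρ)

def Bad (y y' : Fin 4 → Fin N) : Prop := y ≠ y' ∧ ∃ ρ : Fin 20, 16 ≤ ρ.val ∧ e ρ y = e ρ y'

open Classical in
noncomputable def ZZ (ω : Fin 20 → Fin L → P) : ℝ :=
  ∑ y, ∑ y', if Bad e y y' then ∏ ρ, (w (e ρ y) (ω ρ) * if 16 ≤ ρ.val then 1 else w (e ρ y') (ω ρ))
    else 0

lemma sum_XX : ∑ ω : Fin 20 → Fin L → P, XX e ω =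
    (N:ℝ) ^ 4 * pp P L ^ 20 * ((Fintype.card P : ℝ) ^ L) ^ 20 := by
  simp only [XX]
  rw [Finset.sum_comm]
  have : ∀ y, ∑ ω : Fin 20 → Fin L → P, ∏ ρ, w (e ρ y) (ω ρ) =
      pp P L ^ 20 * ((Fintype.card P : ℝ) ^ L) ^ 20 := by
    intro y
    rw [sum_pi (fun ρ g => w (e ρ y) g)]
    simp only [sum_w]
    simp [mul_pow]
  simp only [this]
  simp [mul_assoc]


lemma pair_bound (he : ∀ ρ y y', e ρ y = e ρ y' → supp ρ ⊆ agr y y')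
    (hp : 0 < pp P L) (hp1 : pp P L ≤ 1) (y y' : Fin 4 → Fin N) (ρ : Fin 20) :
    ∑ g : Fin L → P, w (e ρ y) g * w (e ρ y') g ≤
      pp P L ^ 2 * (if supp ρ ⊆ agr y y' then (pp P L)⁻¹ else 1) * (Fintype.card P : ℝ) ^ L := by
  have hD : (0:ℝ) ≤ (Fintype.card P : ℝ) ^ L := by positivity
  by_cases h : e ρ y = e ρ y'
  · rw [if_pos (he ρ y y' h), ← h]
    simp only [w_sq, sum_w]
    apply le_of_eq; field_simp
  · refine (sum_ww _ _ h).trans ?_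
    apply mul_le_mul_of_nonneg_right _ hD
    have : (1:ℝ) ≤ (if supp ρ ⊆ agr y y' then (pp P L)⁻¹ else 1) := by
      split_ifs
      · exact (one_le_inv₀ hp).mpr hp1
      · exact le_rfl
    nlinarith [sq_nonneg (pp P L)]

lemma sum_XX2 (he : ∀ ρ y y', e ρ y = e ρ y' → supp ρ ⊆ agr y y')
    (hp : 0 < pp P L) (hp1 : pp P L ≤ 1) :
    ∑ ω : Fin 20 → Fin L → P, XX e ω ^ 2 ≤
    pp P L ^ 40 * ((N:ℝ) ^ 2 + N * (pp P L)⁻¹ ^ 5) ^ 4 * ((Fintype.card P : ℝ) ^ L) ^ 20 := by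
  have h1 : ∀ ω : Fin 20 → Fin L → P, XX e ω ^ 2 =
      ∑ y, ∑ y', ∏ ρ, (w (e ρ y) (ω ρ) * w (e ρ y') (ω ρ)) := by
    intro ω
    rw [XX, sq, Finset.sum_mul_sum]
    simp only [Finset.prod_mul_distrib]
  simp only [h1]
  rw [Finset.sum_comm]
  simp only [Finset.sum_comm (s := (Finset.univ : Finset (Fin 20 → Fin L → P)))]
  have h2 : ∀ y y', ∑ ω : Fin 20 → Fin L → P, ∏ ρ, (w (e ρ y) (ω ρ) * w (e ρ y') (ω ρ)) ≤
      pp P L ^ 40 * ((Fintype.card P : ℝ) ^ L) ^ 20 * ((pp P L)⁻¹ ^ 5) ^ (agr y y').card := by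
    intro y y'
    rw [sum_pi (fun ρ g => w (e ρ y) g * w (e ρ y') g)]
    refine (prod_bound (fun ρ => supp ρ ⊆ agr y y') (pp P L) ((Fintype.card P : ℝ) ^ L) _ (fun ρ => Finset.sum_nonneg fun g _ => mul_nonneg (w_nonneg _ _)
        (w_nonneg _ _)) (fun ρ => pair_bound e he hp hp1 y y' ρ)).trans ?_
    rw [mul_right_comm, ← pow_mul (pp P L)⁻¹ 5]
    apply mul_le_mul_of_nonneg_left _ (by positivity)
    exact pow_le_pow_right₀ ((one_le_inv₀ hp).mpr hp1) (supp_bound _)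
  refine (Finset.sum_le_sum fun y _ => Finset.sum_le_sum fun y' _ => h2 y y').trans ?_
  simp only [← Finset.mul_sum]
  rw [mul_right_comm]
  exact mul_le_mul_of_nonneg_right (mul_le_mul_of_nonneg_left (sum_agr _ (by positivity))
    (by positivity)) (by positivity)

lemma sum_ZZ (he : ∀ ρ y y', e ρ y = e ρ y' → supp ρ ⊆ agr y y')
    (hp : 0 < pp P L) (hp1 : pp P L ≤ 1) :
    ∑ ω : Fin 20 → Fin L → P, ZZ e ω ≤
    pp P L ^ 42 * ((N:ℝ) ^ 2 + N * (pp P L)⁻¹ ^ 5) ^ 4 * ((Fintype.card P : ℝ) ^ L) ^ 20 := by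
  classical
  simp only [ZZ]
  rw [Finset.sum_comm]
  simp only [Finset.sum_comm (s := (Finset.univ : Finset (Fin 20 → Fin L → P)))]
  have h2 : ∀ y y', ∑ ω : Fin 20 → Fin L → P, (if Bad e y y' then
        ∏ ρ, (w (e ρ y) (ω ρ) * if 16 ≤ ρ.val then 1 else w (e ρ y') (ω ρ)) else 0) ≤
      pp P L ^ 42 * ((Fintype.card P : ℝ) ^ L) ^ 20 * ((pp P L)⁻¹ ^ 5) ^ (agr y y').card := by
    intro y y'
    by_cases hb : Bad e y y'
    swap
    · simp only [if_neg hb, Finset.sum_const_zero]; positivity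
    simp only [if_pos hb]
    rw [sum_pi (fun ρ g => w (e ρ y) g * if 16 ≤ ρ.val then 1 else w (e ρ y') g)]
    refine (prod_bound (fun ρ => 16 ≤ ρ.val ∨ supp ρ ⊆ agr y y') (pp P L)
      ((Fintype.card P : ℝ) ^ L) _ (fun ρ => Finset.sum_nonneg fun g _ => mul_nonneg (w_nonneg _ _)
        (by split_ifs; exacts [zero_le_one, w_nonneg _ _])) ?_).trans ?_
    · intro ρ
      by_cases h : 16 ≤ ρ.val
      · simp only [h, if_true, mul_one, true_or, sum_w]
        apply le_of_eq; field_simp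
      · simp only [h, if_false, false_or]
        exact pair_bound e he hp hp1 y y' ρ
    · rw [mul_right_comm, ← pow_mul (pp P L)⁻¹ 5]
      have hS := supp_bound' (agr y y') (by
        intro hu
        apply hb.1
        funext i
        have : i ∈ agr y y' := by rw [hu]; simp
        simpa [agr] using this) (by
        obtain ⟨ρ, h1, h2⟩ := hb.2
        exact ⟨ρ, h1, he _ _ _ h2⟩)
      have : (pp P L)⁻¹ ^ (Finset.univ.filter fun ρ : Fin 20 => 16 ≤ ρ.val ∨ supp ρ ⊆ agr y y').card
          ≤ pp P L ^ 2 * (pp P L)⁻¹ ^ (5 * (agr y y').card) := by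
        have h3 := pow_le_pow_right₀ ((one_le_inv₀ hp).mpr hp1) hS
        rw [pow_add] at h3
        calc _ = pp P L ^ 2 * ((pp P L)⁻¹ ^ (Finset.univ.filter fun ρ : Fin 20 =>
                16 ≤ ρ.val ∨ supp ρ ⊆ agr y y').card * (pp P L)⁻¹ ^ 2) := by field_simp
          _ ≤ _ := mul_le_mul_of_nonneg_left h3 (by positivity)
      calc _ ≤ pp P L ^ 40 * ((Fintype.card P : ℝ) ^ L) ^ 20 *
            (pp P L ^ 2 * (pp P L)⁻¹ ^ (5 * (agr y y').card)) :=
            mul_le_mul_of_nonneg_left this (by positivity)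
        _ = _ := by ring
  refine (Finset.sum_le_sum fun y _ => Finset.sum_le_sum fun y' _ => h2 y y').trans ?_
  simp only [← Finset.mul_sum]
  rw [mul_right_comm]
  exact mul_le_mul_of_nonneg_right (mul_le_mul_of_nonneg_left (sum_agr _ (by positivity))
    (by positivity)) (by positivity)

lemma prod_w_eq (y : Fin 4 → Fin N) (ω : Fin 20 → Fin L → P) (h : ∀ ρ, ∃ j, ω ρ j = e ρ y) :
    ∏ ρ, w (e ρ y) (ω ρ) = 1 :=
  Finset.prod_eq_one fun ρ _ => by rw [w, if_pos (h ρ)]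

def Succ (ω : Fin 20 → Fin L → P) : Prop :=
  ∃ y, (∀ ρ, ∃ j, ω ρ j = e ρ y) ∧
    ∀ y', (∀ ρ : Fin 20, ρ.val < 16 → ∃ j, ω ρ j = e ρ y') →
      (∃ ρ : Fin 20, 16 ≤ ρ.val ∧ e ρ y = e ρ y') → y = y'

lemma XX_le_ZZ (ω : Fin 20 → Fin L → P) (h : ¬ Succ e ω) : XX e ω ≤ ZZ e ω := by
  classical
  unfold XX ZZ
  apply Finset.sum_le_sum
  intro y _
  have hn : ∀ y', 0 ≤ (if Bad e y y' then
        ∏ ρ, (w (e ρ y) (ω ρ) * if 16 ≤ ρ.val then 1 else w (e ρ y') (ω ρ)) else 0) := by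
    intro y'
    split_ifs
    · exact Finset.prod_nonneg fun ρ _ => mul_nonneg (w_nonneg _ _)
        (by split_ifs; exacts [zero_le_one, w_nonneg _ _])
    · exact le_rfl
  by_cases hy : ∀ ρ, ∃ j, ω ρ j = e ρ y
  · have : ∃ y', (∀ ρ : Fin 20, ρ.val < 16 → ∃ j, ω ρ j = e ρ y') ∧
      (∃ ρ : Fin 20, 16 ≤ ρ.val ∧ e ρ y = e ρ y') ∧ y ≠ y' := by
      by_contra hc
      push Not at hc
      exact h ⟨y, hy, fun y' h1 h2 => hc y' h1 h2⟩
    obtain ⟨y', h1, h2, h3⟩ := this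
    refine le_trans ?_ (Finset.single_le_sum (fun y' _ => hn y') (Finset.mem_univ y'))
    rw [if_pos ⟨h3, h2⟩, prod_w_eq e y ω hy]
    apply le_of_eq; symm
    apply Finset.prod_eq_one
    intro ρ _
    rw [w, if_pos (hy ρ)]
    split_ifs with h16
    · simp
    · rw [w, if_pos (h1 ρ (by omega))]; simp
  · push Not at hy
    obtain ⟨ρ, hρ⟩ := hy
    rw [Finset.prod_eq_zero (Finset.mem_univ ρ)]
    · exact Finset.sum_nonneg fun y' _ => hn y'
    · rw [w, if_neg]; push Not; exact hρ

open Classical in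
theorem prob_bad (he : ∀ ρ y y', e ρ y = e ρ y' → supp ρ ⊆ agr y y')
    (hp : 0 < pp P L) (hp1 : pp P L ≤ 1) (hN : 0 < N) :
    ((Finset.univ.filter fun ω : Fin 20 → Fin L → P => ¬ Succ e ω).card : ℝ) ≤
    (4 * ((1 + 1 / (N * pp P L ^ 5)) ^ 4 - 1) + 2 * (pp P L ^ 2 * (1 + N * pp P L ^ 5) ^ 4)) *
     ((Fintype.card P : ℝ) ^ L) ^ 20 := by
  set p := pp P L with hpdef
  set D : ℝ := ((Fintype.card P : ℝ) ^ L) ^ 20 with hD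
  have hN' : (0:ℝ) < N := by exact_mod_cast hN
  set μ : ℝ := (N:ℝ) ^ 4 * p ^ 20 with hμ
  have hμ0 : 0 < μ := by positivity
  have hpt : ∀ ω : Fin 20 → Fin L → P, (if ¬ Succ e ω then (1:ℝ) else 0) ≤
      4 / μ ^ 2 * (XX e ω ^ 2 - 2 * μ * XX e ω + μ ^ 2) + 2 / μ * ZZ e ω := by
    intro ω
    have hX0 : 0 ≤ XX e ω := Finset.sum_nonneg fun y _ => Finset.prod_nonneg fun ρ _ => w_nonneg _ _
    have hZ0 : 0 ≤ ZZ e ω := by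
      refine Finset.sum_nonneg fun y _ => Finset.sum_nonneg fun y' _ => ?_
      split_ifs
      · exact Finset.prod_nonneg fun ρ _ => mul_nonneg (w_nonneg _ _)
          (by split_ifs; exacts [zero_le_one, w_nonneg _ _])
      · exact le_rfl
    have hsq : XX e ω ^ 2 - 2 * μ * XX e ω + μ ^ 2 = (XX e ω - μ) ^ 2 := by ring
    rw [hsq]
    have ha : 0 ≤ 4 / μ ^ 2 * (XX e ω - μ) ^ 2 := by positivity
    have hb : 0 ≤ 2 / μ * ZZ e ω := by positivity
    by_cases hs : Succ e ω
    · rw [if_neg (not_not.mpr hs)]; linarith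
    · rw [if_pos hs]
      have hXZ := XX_le_ZZ e ω hs
      by_cases hh : μ / 2 ≤ ZZ e ω
      · have : 1 ≤ 2 / μ * ZZ e ω := by
          rw [div_mul_eq_mul_div, le_div_iff₀ hμ0]; linarith
        linarith
      · have : 1 ≤ 4 / μ ^ 2 * (XX e ω - μ) ^ 2 := by
          rw [div_mul_eq_mul_div, le_div_iff₀ (by positivity)]
          nlinarith
        linarith
  have hsum := Finset.sum_le_sum fun ω (_ : ω ∈ (Finset.univ : Finset (Fin 20 → Fin L → P))) => hpt ω
  rw [Finset.sum_boole] at hsum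
  refine hsum.trans ?_
  have hcard : (∑ ω : Fin 20 → Fin L → P, μ ^ 2) = D * μ ^ 2 := by
    simp [hD]
  rw [Finset.sum_add_distrib, ← Finset.mul_sum, ← Finset.mul_sum, Finset.sum_add_distrib,
    Finset.sum_sub_distrib, ← Finset.mul_sum, sum_XX, hcard, ← hpdef, ← hD, ← hμ]
  have h1 := sum_XX2 e he hp hp1
  have h2 := sum_ZZ e he hp hp1
  rw [← hpdef, ← hD] at h1 h2
  calc _ ≤ 4 / μ ^ 2 * (p ^ 40 * ((N:ℝ) ^ 2 + N * p⁻¹ ^ 5) ^ 4 * D - 2 * μ * (μ * D) + D * μ ^ 2)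
        + 2 / μ * (p ^ 42 * ((N:ℝ) ^ 2 + N * p⁻¹ ^ 5) ^ 4 * D) := by gcongr
    _ = _ := by
      rw [hμ]; field_simp; ring

end moment

section process
open SemiRandomHypergraph

variable {n : ℕ}

/-- history generated from the list of random pairs (most recent first) -/
def Hs (G : List (Col n 2) → Col n 2 → Col n (3 - 2)) : List (Col n 2) → List (Step n 2 3)
  | [] => []
  | U :: us => (U, G us U) :: Hs G us

noncomputable def strat (G : List (Col n 2) → Col n 2 → Col n (3 - 2)) : Strategy n 2 3 :=
  fun hist U => PMF.pure (G (hist.map Prod.fst) U)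

lemma Hs_fst (G : List (Col n 2) → Col n 2 → Col n (3 - 2)) (us : List (Col n 2)) :
    (Hs G us).map Prod.fst = us := by
  induction us with
  | nil => rfl
  | cons U us ih => simp [Hs, ih]

lemma Hs_mem (G : List (Col n 2) → Col n 2 → Col n (3 - 2)) (us s : List (Col n 2)) (U : Col n 2)
    (h : (U :: s) <:+ us) : (U, G s U) ∈ Hs G us := by
  induction us with
  | nil => simp at h
  | cons V us ih =>
    rw [List.suffix_cons_iff] at h
    rcases h with h | h
    · injection h with h1 h2
      subst h1 h2
      simp [Hs]
    · simp [Hs, ih h]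

lemma uniform_cons {P : Type*} [Fintype P] [Nonempty P] (t : ℕ) :
    PMF.uniformOfFintype (Fin (t + 1) → P) =
      (PMF.uniformOfFintype (Fin t → P)).bind fun f =>
        (PMF.uniformOfFintype P).bind fun U => PMF.pure (Fin.cons U f : Fin (t + 1) → P) := by
  classical
  ext g
  simp only [PMF.bind_apply, PMF.uniformOfFintype_apply, tsum_fintype, PMF.pure_apply]
  have : ∀ (f : Fin t → P) (U : P), (g = (Fin.cons U f : Fin (t + 1) → P)) ↔ f = Fin.tail g ∧ U = g 0 := by
    intro f U
    constructor
    · rintro rfl; simp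
    · rintro ⟨rfl, rfl⟩; simp
  simp only [this]
  rw [Finset.sum_eq_single (Fin.tail g)]
  · rw [Finset.sum_eq_single (g 0)]
    · simp only [and_self, if_true, mul_one]
      rw [← ENNReal.mul_inv (by right; simp) (by left; simp)]
      simp [pow_succ]
    · intro b _ hb; simp [hb]
    · simp
  · intro b _ hb; simp [hb]
  · simp

lemma history_eq (h : Nonempty (Col n 2)) (G : List (Col n 2) → Col n 2 → Col n (3 - 2)) (t : ℕ) :
    historyPMF h (strat G) t =
      (PMF.uniformOfFintype (Fin t → Col n 2)).map fun f => Hs G (List.ofFn f) := by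
  induction t with
  | zero =>
    ext x
    simp [historyPMF, PMF.map_apply, Hs, PMF.pure_apply]
  | succ t ih =>
    rw [historyPMF, ih, uniform_cons]
    simp only [PMF.map_bind, PMF.bind_map, PMF.pure_map, strat, Function.comp_def, Hs_fst,
      List.ofFn_succ, Fin.cons_zero, Fin.cons_succ, Hs]

lemma suffix_ofFn {P : Type*} {T : ℕ} (f : Fin T → P) (i : Fin T) :
    ∃ s : List P, (f i :: s) <:+ List.ofFn f ∧ s.length = T - 1 - i.val := by
  refine ⟨(List.ofFn f).drop (i.val + 1), ?_, by simp; omega⟩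
  have h := List.drop_eq_getElem_cons (l := List.ofFn f) (i := i.val) (by simp)
  have h2 : (List.ofFn f)[i.val]'(by simp) = f i := by simp
  rw [h2] at h
  rw [← h]
  exact List.drop_suffix _ _

lemma ofFn_suffix {P : Type*} {T : ℕ} (f : Fin T → P) (U : P) (s : List P)
    (h : (U :: s) <:+ List.ofFn f) : s.length < T ∧ ∀ i : Fin T, i.val = T - 1 - s.length → f i = U := by
  obtain ⟨t, ht⟩ := h
  have hl := congrArg List.length ht
  simp at hl
  refine ⟨by omega, ?_⟩
  intro i hi
  have hti : t.length = i.val := by omega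
  have h1 : (List.ofFn f)[i.val]? = some (f i) := by simp
  rw [← ht, ← hti] at h1
  simpa using h1.symm

variable {N L : ℕ}

def ext4 (y : Fin 4 → Fin N) (i : Fin 6) : ℕ := if h : i.val < 4 then (y ⟨i.val, h⟩).val else 0

lemma ext4_lt (hN : 0 < N) (y : Fin 4 → Fin N) (i : Fin 6) : ext4 y i < N := by
  unfold ext4; split_ifs
  · exact Fin.isLt _
  · exact hN

def vtx (hN : 0 < N) (hn : 6 * N ≤ n) (y : Fin 4 → Fin N) (i : Fin 6) : Fin n :=
  ⟨6 * ext4 y i + i.val, by have := ext4_lt hN y i; omega⟩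

lemma vtx_inj (hN : 0 < N) (hn : 6 * N ≤ n) (y y' : Fin 4 → Fin N) (i j : Fin 6)
    (h : vtx hN hn y i = vtx hN hn y' j) : i = j ∧ ext4 y i = ext4 y' j := by
  have := congrArg Fin.val h
  simp only [vtx] at this
  constructor
  · ext; omega
  · omega

def ee (hN : 0 < N) (hn : 6 * N ≤ n) (ρ : Fin 20) (y : Fin 4 → Fin N) : Col n 2 :=
  ⟨{vtx hN hn y (tri ρ).1, vtx hN hn y (tri ρ).2.1}, by
    apply Finset.card_pair
    intro h
    exact (tri_ne ρ).1 (vtx_inj hN hn y y _ _ h).1⟩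

lemma ee_agr (hN : 0 < N) (hn : 6 * N ≤ n) (ρ : Fin 20) (y y' : Fin 4 → Fin N)
    (h : ee hN hn ρ y = ee hN hn ρ y') : supp ρ ⊆ agr y y' := by
  have h' : ({vtx hN hn y (tri ρ).1, vtx hN hn y (tri ρ).2.1} : Finset (Fin n)) =
    {vtx hN hn y' (tri ρ).1, vtx hN hn y' (tri ρ).2.1} := congrArg Subtype.val h
  have key : ∀ k : Fin 6, k = (tri ρ).1 ∨ k = (tri ρ).2.1 → ext4 y k = ext4 y' k := by
    intro k hk
    have hm : vtx hN hn y k ∈ ({vtx hN hn y' (tri ρ).1, vtx hN hn y' (tri ρ).2.1} : Finset (Fin n)) := by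
      rw [← h']
      rcases hk with rfl | rfl <;> simp
    rw [Finset.mem_insert, Finset.mem_singleton] at hm
    rcases hm with hm | hm
    · obtain ⟨h1, h2⟩ := vtx_inj hN hn _ _ _ _ hm
      rw [h2, h1]
    · obtain ⟨h1, h2⟩ := vtx_inj hN hn _ _ _ _ hm
      rw [h2, h1]
  intro i hi
  simp only [supp, Finset.mem_filter, Finset.mem_univ, true_and] at hi
  simp only [agr, Finset.mem_filter, Finset.mem_univ, true_and]
  have h3 := key (Fin.castLE (by norm_num) i) (by
    rcases hi with hi | hi
    · left; ext; simpa using hi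
    · right; ext; simpa using hi)
  simp only [ext4, Fin.val_castLE, i.isLt, dif_pos] at h3
  exact Fin.ext h3

def HitL (L : ℕ) {P : Type*} (s : List P) (k : ℕ) (a : P) : Prop :=
  ∃ s', (a :: s') <:+ s ∧ s'.length / L = k

def Good16 (L : ℕ) (hN : 0 < N) (hn : 6 * N ≤ n) (s : List (Col n 2)) (y : Fin 4 → Fin N) : Prop :=
  ∀ ρ : Fin 20, ρ.val < 16 → HitL L s ρ.val (ee hN hn ρ y)

def role (k : ℕ) : Fin 20 := ⟨k % 20, Nat.mod_lt _ (by norm_num)⟩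

open Classical in
noncomputable def GG (L : ℕ) (hN : 0 < N) (hn : 6 * N ≤ n) (s : List (Col n 2)) (U : Col n 2) :
    Col n (3 - 2) :=
  if h : ∃ y : Fin 4 → Fin N, Good16 L hN hn s y ∧ U = ee hN hn (role (s.length / L)) y then
    ⟨{vtx hN hn h.choose (tri (role (s.length / L))).2.2}, Finset.card_singleton _⟩
  else ⟨{vtx hN hn (fun _ => ⟨0, hN⟩) (tri (role (s.length / L))).2.2}, Finset.card_singleton _⟩

lemma vtx_fixed (hN : 0 < N) (hn : 6 * N ≤ n) (y y' : Fin 4 → Fin N) (i : Fin 6) (hi : 4 ≤ i.val) :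
    vtx hN hn y i = vtx hN hn y' i := by
  have h : ¬ i.val < 4 := by omega
  simp [vtx, ext4, h]

lemma contains_of (hN : 0 < N) (hn : 6 * N ≤ n) (us : List (Col n 2)) (y : Fin 4 → Fin N)
    (h20 : ∀ ρ : Fin 20, HitL L us ρ.val (ee hN hn ρ y))
    (huniq : ∀ y', Good16 L hN hn us y' →
      (∃ ρ : Fin 20, 16 ≤ ρ.val ∧ ee hN hn ρ y = ee hN hn ρ y') → y = y') :
    ContainsCopy (Finset.powersetCard 3 (Finset.univ : Finset (Fin 6))) (Hs (GG L hN hn) us) := by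
  refine ⟨⟨vtx hN hn y, fun i j h => (vtx_inj hN hn y y i j h).1⟩, ?_⟩
  intro e he
  obtain ⟨ρ, rfl⟩ := tri_edges e he
  obtain ⟨s, hs, hsl⟩ := h20 ρ
  refine ⟨_, Hs_mem (GG L hN hn) us s _ hs, ?_⟩
  have hrole : role (s.length / L) = ρ := by
    rw [hsl]; ext; simp [role, Nat.mod_eq_of_lt ρ.isLt]
  have hresp : (GG L hN hn s (ee hN hn ρ y)).1 = {vtx hN hn y (tri ρ).2.2} := by
    by_cases h16 : ρ.val < 16
    · have := tri_fixed ρ h16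
      unfold GG
      split_ifs with h
      · simp only [hrole]
        rw [vtx_fixed hN hn _ y _ this]
      · simp only [hrole]
        rw [vtx_fixed hN hn _ y _ this]
    · have hex : ∃ y' : Fin 4 → Fin N, Good16 L hN hn s y' ∧
          ee hN hn ρ y = ee hN hn (role (s.length / L)) y' := by
        refine ⟨y, ?_, by rw [hrole]⟩
        intro ρ' hρ'
        obtain ⟨s', hs', hsl'⟩ := h20 ρ'
        refine ⟨s', ?_, hsl'⟩
        have hlt : s'.length < s.length := by
          by_contra hc
          have := Nat.div_le_div_right (c := L) (not_lt.mp hc)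
          omega
        exact List.suffix_of_suffix_length_le hs' ((List.suffix_cons _ _).trans hs) (by
          simp; omega)
      have hch : y = hex.choose := by
        apply huniq
        · intro ρ' hρ'
          obtain ⟨s', hs', hsl'⟩ := hex.choose_spec.1 ρ' hρ'
          exact ⟨s', hs'.trans ((List.suffix_cons _ _).trans hs), hsl'⟩
        · exact ⟨ρ, by omega, by
            have := hex.choose_spec.2
            exact this.trans (congrArg (fun r => ee hN hn r hex.choose) hrole)⟩
      unfold GG
      rw [dif_pos hex]
      change ({vtx hN hn hex.choose (tri (role (s.length / L))).2.2} : Finset (Fin n)) = _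
      rw [← hch, hrole]
  rw [hresp]
  obtain ⟨h1, h2, h3⟩ := tri_ne ρ
  have hab : vtx hN hn y (tri ρ).1 ≠ vtx hN hn y (tri ρ).2.1 := fun h => h1 (vtx_inj hN hn y y _ _ h).1
  simp only [ee]
  rw [Finset.insert_val_of_notMem (by simp [h1, h2]), Finset.insert_val_of_notMem (by simp [h3]),
    Finset.insert_val_of_notMem (by simpa using hab)]
  simp
  rfl

/-- windows of a sequence -/
def win (L : ℕ) {P : Type*} (f : Fin (20 * L) → P) (ρ : Fin 20) (j : Fin L) : P :=
  f (Fin.rev (finProdFinEquiv (ρ, j)))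

lemma win_bij (L : ℕ) {P : Type*} : Function.Bijective (win L : (Fin (20 * L) → P) → _) := by
  constructor
  · intro f g h
    funext i
    have := congrFun (congrFun h (finProdFinEquiv.symm (Fin.rev i)).1)
      (finProdFinEquiv.symm (Fin.rev i)).2
    simp only [win, Prod.mk.eta, Equiv.apply_symm_apply, Fin.rev_rev] at this
    exact this
  · intro ω
    refine ⟨fun i => ω (finProdFinEquiv.symm (Fin.rev i)).1 (finProdFinEquiv.symm (Fin.rev i)).2, ?_⟩
    funext ρ j
    simp [win]

lemma hit_iff {P : Type*} (f : Fin (20 * L) → P) (ρ : Fin 20) (a : P) :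
    HitL L (List.ofFn f) ρ.val a ↔ ∃ j, win L f ρ j = a := by
  constructor
  · rintro ⟨s, hs, hsl⟩
    obtain ⟨h1, h2⟩ := ofFn_suffix f a s hs
    have hL : 0 < L := by
      rcases Nat.eq_zero_or_pos L with h | h
      · subst h; simp at h1
      · exact h
    refine ⟨⟨s.length % L, Nat.mod_lt _ hL⟩, ?_⟩
    apply h2
    have := Nat.mod_add_div s.length L
    rw [hsl] at this
    simp only [Fin.val_rev, finProdFinEquiv_apply_val]
    omega
  · rintro ⟨j, rfl⟩
    obtain ⟨s, hs, hsl⟩ := suffix_ofFn f (Fin.rev (finProdFinEquiv (ρ, j)))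
    refine ⟨s, hs, ?_⟩
    have hk := (finProdFinEquiv (ρ, j)).isLt
    have : s.length = j.val + L * ρ.val := by
      rw [hsl]
      simp only [Fin.val_rev, finProdFinEquiv_apply_val] at hk ⊢
      omega
    have hj := j.isLt
    rw [this, Nat.add_mul_div_left _ _ (by omega), Nat.div_eq_of_lt hj, zero_add]

lemma contains_of_succ (hN : 0 < N) (hn : 6 * N ≤ n) (f : Fin (20 * L) → Col n 2)
    (h : Succ (ee hN hn) (win L f)) :
    ContainsCopy (Finset.powersetCard 3 (Finset.univ : Finset (Fin 6)))
      (Hs (GG L hN hn) (List.ofFn f)) := by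
  obtain ⟨y, h1, h2⟩ := h
  refine contains_of hN hn _ y (fun ρ => (hit_iff f ρ _).mpr (h1 ρ)) ?_
  intro y' hy' hρ
  exact h2 y' (fun ρ hρ' => (hit_iff f ρ _).mp (hy' ρ hρ')) hρ

noncomputable def bnd (p N : ℝ) : ℝ :=
  4 * ((1 + 1 / (N * p ^ 5)) ^ 4 - 1) + 2 * (p ^ 2 * (1 + N * p ^ 5) ^ 4)

theorem exists_strategy (hN : 0 < N) (hn : 6 * N ≤ n) (hp : 0 < pp (Col n 2) L)
    (hp1 : pp (Col n 2) L ≤ 1) (q : ℝ≥0∞) (hq : q + ENNReal.ofReal (bnd (pp (Col n 2) L) N) ≤ 1) :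
    ∃ S : Strategy n 2 3, q ≤ probContains n 2 3
      (Finset.powersetCard 3 (Finset.univ : Finset (Fin 6))) S (20 * L) := by
  classical
  refine ⟨strat (GG L hN hn), ?_⟩
  have h2n : 2 ≤ n := by omega
  have hne : Nonempty (Col n 2) := col_nonempty h2n
  rw [probContains, dif_pos h2n, history_eq, PMF.toOuterMeasure_map_apply,
    PMF.toOuterMeasure_uniformOfFintype_apply]
  set A : Set (Fin (20 * L) → Col n 2) := (fun f => Hs (GG L hN hn) (List.ofFn f)) ⁻¹'
    {hist | ContainsCopy (Finset.powersetCard 3 (Finset.univ : Finset (Fin 6))) hist} with hA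
  have hbad := prob_bad (L := L) (ee hN hn) (ee_agr hN hn) hp hp1 hN
  have hcard : Fintype.card (Fin (20 * L) → Col n 2) =
      (Finset.univ.filter fun ω : Fin 20 → Fin L → Col n 2 => Succ (ee hN hn) ω).card +
      (Finset.univ.filter fun ω : Fin 20 → Fin L → Col n 2 => ¬ Succ (ee hN hn) ω).card := by
    rw [Finset.card_filter_add_card_filter_not, Finset.card_univ]
    exact Fintype.card_of_bijective (win_bij L)
  have hle : (Finset.univ.filter fun ω : Fin 20 → Fin L → Col n 2 => Succ (ee hN hn) ω).card ≤
      Fintype.card A := by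
    rw [← Set.toFinset_card]
    apply Finset.card_le_card_of_surjOn (win L)
    intro ω hω
    obtain ⟨f, rfl⟩ := (win_bij L).2 ω
    refine ⟨f, ?_, rfl⟩
    simp only [Finset.coe_filter, Finset.mem_univ, true_and, Set.mem_ofPred_eq] at hω
    simp only [Set.coe_toFinset]
    exact contains_of_succ hN hn f hω
  have hD : ((Fintype.card (Fin (20 * L) → Col n 2) : ℕ) : ℝ) =
      ((Fintype.card (Col n 2) : ℝ) ^ L) ^ 20 := by
    rw [Fintype.card_fun, Fintype.card_fin, ← pow_mul, mul_comm L 20]; push_cast; rfl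
  rw [← hD] at hbad
  set D := Fintype.card (Fin (20 * L) → Col n 2) with hDdef
  have hD0 : 0 < D := Fintype.card_pos
  have hbad' : ((Finset.univ.filter fun ω : Fin 20 → Fin L → Col n 2 =>
      ¬ Succ (ee hN hn) ω).card : ℝ≥0∞) ≤ ENNReal.ofReal (bnd (pp (Col n 2) L) N) * D := by
    have h := ENNReal.ofReal_le_ofReal hbad
    rw [ENNReal.ofReal_natCast, ENNReal.ofReal_mul' (by positivity), ENNReal.ofReal_natCast] at h
    exact h
  rw [ENNReal.le_div_iff_mul_le (by left; simp; omega) (by left; simp)]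
  have hfin : ENNReal.ofReal (bnd (pp (Col n 2) L) N) * D ≠ ⊤ :=
    ENNReal.mul_ne_top ENNReal.ofReal_ne_top (by simp)
  have hs : q * D + ENNReal.ofReal (bnd (pp (Col n 2) L) N) * D ≤
      (Fintype.card A : ℝ≥0∞) + ENNReal.ofReal (bnd (pp (Col n 2) L) N) * D := by
    calc _ = (q + ENNReal.ofReal (bnd (pp (Col n 2) L) N)) * D := by rw [add_mul]
      _ ≤ 1 * D := by gcongr
      _ = (D : ℝ≥0∞) := one_mul _
      _ ≤ _ := by
        have h0 : (D : ℝ≥0∞) = (((Finset.univ.filter fun ω : Fin 20 → Fin L → Col n 2 =>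
            Succ (ee hN hn) ω).card : ℕ) : ℝ≥0∞) + (((Finset.univ.filter fun
            ω : Fin 20 → Fin L → Col n 2 => ¬ Succ (ee hN hn) ω).card : ℕ) : ℝ≥0∞) := by
          rw [hcard]; push_cast; rfl
        rw [h0]
        refine add_le_add (by exact_mod_cast hle) (hbad'.trans (le_of_eq ?_))
        rw [h0]
  exact (ENNReal.add_le_add_iff_right hfin).mp hs

end process

section asymptotics
open SemiRandomHypergraph

lemma pp_bounds {P : Type*} [Fintype P] (L : ℕ) (M a : ℝ) (hM : M = Fintype.card P) (hM1 : 1 ≤ M)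
    (ha : a = L / M) : pp P L ≤ 1 ∧ pp P L ≤ a ∧ a / (1 + a) ≤ pp P L := by
  have hM0 : 0 < M := by linarith
  have hx : 1 / M ≤ 1 := by rw [div_le_one hM0]; exact hM1
  have hx0 : 0 < 1 / M := by positivity
  have hax : a = L * (1 / M) := by rw [ha]; ring
  have ha0 : 0 ≤ a := by rw [hax]; positivity
  unfold pp
  rw [← hM]
  refine ⟨?_, ?_, ?_⟩
  · have := pow_nonneg (sub_nonneg.mpr hx) L
    linarith
  · have := one_add_mul_le_pow (a := -(1 / M)) (by linarith) L
    rw [← sub_eq_add_neg] at this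
    rw [hax]; linarith
  · have h1 := one_add_mul_le_pow (a := 1 / M) (by linarith) L
    rw [← hax] at h1
    have h2 : (1 - 1 / M) ^ L * (1 + 1 / M) ^ L ≤ 1 := by
      rw [← mul_pow]
      exact pow_le_one₀ (by nlinarith) (by nlinarith)
    have h0 := pow_nonneg (sub_nonneg.mpr hx) L
    have h3 : (1 - 1 / M) ^ L * (1 + a) ≤ 1 := by
      refine le_trans ?_ h2
      exact mul_le_mul_of_nonneg_left h1 h0
    rw [div_le_iff₀ (by linarith)]
    linarith

lemma key (q : ℝ≥0∞) (hq : q < 1) : ∃ C : ℝ, 0 < C ∧ ∀ᶠ n : ℕ in atTop, ∃ m : ℕ, 1 ≤ m ∧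
    (m : ℝ) ≤ C * ((n : ℝ) ^ 2 * (n : ℝ) ^ (-(1 / 5) : ℝ)) ∧
    tauQ 2 3 (Finset.powersetCard 3 (Finset.univ : Finset (Fin 6))) q n ≤ (m : ℕ∞) := by
  have hqt : q ≠ ⊤ := ne_top_of_lt hq
  set ε : ℝ := 1 - q.toReal with hε
  have hε0 : 0 < ε := by
    have : q.toReal < 1 := by
      rw [← ENNReal.toReal_one]
      exact (ENNReal.toReal_lt_toReal hqt ENNReal.one_ne_top).mpr hq
    linarith
  -- choice of K
  have hK : ∀ᶠ K : ℝ in atTop, 4 * ((1 + 12 / K ^ 5) ^ 4 - 1) < ε / 2 := by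
    have h1 : Tendsto (fun K : ℝ => 12 / K ^ 5) atTop (nhds 0) :=
      tendsto_const_nhds.div_atTop (tendsto_pow_atTop (by norm_num))
    have h2 : Tendsto (fun K : ℝ => 4 * ((1 + 12 / K ^ 5) ^ 4 - 1)) atTop
        (nhds (4 * ((1 + 0) ^ 4 - 1))) :=
      (((h1.const_add 1).pow 4).sub_const 1).const_mul 4
    exact h2.eventually_lt_const (by norm_num; linarith)
  obtain ⟨K, hK, hK1⟩ := (hK.and (eventually_ge_atTop 1)).exists
  refine ⟨40 * K, by positivity, ?_⟩
  have hη : Tendsto (fun n : ℕ => (n : ℝ) ^ (-(1 / 5) : ℝ)) atTop (nhds 0) :=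
    (tendsto_rpow_neg_atTop (by norm_num)).comp tendsto_natCast_atTop_atTop
  have hη1 : ∀ᶠ n : ℕ in atTop, 8 * K * (n : ℝ) ^ (-(1 / 5) : ℝ) < 1 := by
    have := hη.const_mul (8 * K)
    exact this.eventually_lt_const (by norm_num)
  have hη2 : ∀ᶠ n : ℕ in atTop, 2 * ((8 * K * (n : ℝ) ^ (-(1 / 5) : ℝ)) ^ 2 *
      (1 + 8 ^ 5 * K ^ 5) ^ 4) < ε / 2 := by
    have := (((hη.const_mul (8 * K)).pow 2).mul_const ((1 + 8 ^ 5 * K ^ 5) ^ 4)).const_mul 2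
    exact this.eventually_lt_const (by norm_num; linarith)
  filter_upwards [hη1, hη2, eventually_ge_atTop 12] with n h1 h2 hn
  have hnR : (12:ℝ) ≤ n := by exact_mod_cast hn
  set η : ℝ := (n : ℝ) ^ (-(1 / 5) : ℝ) with hηdef
  have hη0 : 0 < η := Real.rpow_pos_of_pos (by linarith) _
  have hη5 : (n : ℝ) * η ^ 5 = 1 := by
    rw [hηdef, ← Real.rpow_natCast, ← Real.rpow_mul (by linarith)]
    norm_num
    rw [Real.rpow_neg_one]; field_simp
  have hηle : η ≤ 1 := by nlinarith
  have hbig : 1 ≤ K * ((n:ℝ) ^ 2 * η) := by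
    have hη4 : η ^ 5 ≤ η := by
      calc η ^ 5 = η ^ 4 * η := by ring
        _ ≤ 1 * η := by
          apply mul_le_mul_of_nonneg_right (pow_le_one₀ hη0.le hηle) hη0.le
        _ = η := one_mul _
    have : 1 ≤ (n:ℝ) ^ 2 * η := by nlinarith
    nlinarith
  set L : ℕ := ⌈K * ((n:ℝ) ^ 2 * η)⌉₊ with hL
  have hL1 : K * ((n:ℝ) ^ 2 * η) ≤ L := Nat.le_ceil _
  have hL2 : (L:ℝ) ≤ 2 * (K * ((n:ℝ) ^ 2 * η)) := by
    have := (Nat.ceil_lt_add_one (show 0 ≤ K * ((n:ℝ) ^ 2 * η) by linarith)).le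
    linarith
  have hLpos : (1:ℝ) ≤ L := hbig.trans hL1
  have hLn : 1 ≤ L := by exact_mod_cast hLpos
  refine ⟨20 * L, by omega, by push_cast; linarith, ?_⟩
  set N := n / 6 with hNdef
  have hN : 0 < N := by omega
  have hNn : 6 * N ≤ n := by omega
  have hN1 : (n:ℝ) / 12 ≤ N := by
    have : n ≤ 12 * N := by omega
    have : (n:ℝ) ≤ 12 * N := by exact_mod_cast this
    linarith
  have hN2 : (N:ℝ) ≤ n := by
    have : N ≤ n := by omega
    exact_mod_cast this
  set M : ℝ := (Fintype.card (Col n 2) : ℝ) with hM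
  have hMv : M = n * (n - 1) / 2 := by
    rw [hM, Fintype.card_finset_len, Fintype.card_fin, Nat.cast_choose_two]
  have hM1 : (n:ℝ) ^ 2 / 4 ≤ M := by rw [hMv]; nlinarith
  have hM2 : M ≤ (n:ℝ) ^ 2 / 2 := by rw [hMv]; nlinarith
  have hM3 : 1 ≤ M := by nlinarith
  set a : ℝ := L / M with ha
  obtain ⟨hp1, hpa, hap⟩ := pp_bounds (P := Col n 2) L M a hM hM3 ha
  have hMpos : 0 < M := by linarith
  have ha1 : a ≤ 8 * K * η := by
    rw [ha, div_le_iff₀ hMpos]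
    have : 8 * K * η * ((n:ℝ) ^ 2 / 4) ≤ 8 * K * η * M :=
      mul_le_mul_of_nonneg_left hM1 (by positivity)
    linarith
  have ha2 : 2 * K * η ≤ a := by
    rw [ha, le_div_iff₀ hMpos]
    have : 2 * K * η * M ≤ 2 * K * η * ((n:ℝ) ^ 2 / 2) :=
      mul_le_mul_of_nonneg_left hM2 (by positivity)
    linarith
  set p := pp (Col n 2) L with hp
  have hKη : 0 < K * η := by positivity
  have hpl : K * η ≤ p := by
    refine le_trans ?_ hap
    rw [le_div_iff₀ (by linarith)]
    nlinarith
  have hp0 : 0 < p := by linarith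
  have hpu : p ≤ 8 * K * η := hpa.trans ha1
  have hlow : K ^ 5 / 12 ≤ N * p ^ 5 := by
    calc K ^ 5 / 12 = (n:ℝ) / 12 * (K * η) ^ 5 := by
          have : (n:ℝ) / 12 * (K * η) ^ 5 = K ^ 5 / 12 * (n * η ^ 5) := by ring
          rw [this, hη5, mul_one]
      _ ≤ N * p ^ 5 := by gcongr
  have hupp : N * p ^ 5 ≤ 8 ^ 5 * K ^ 5 := by
    calc N * p ^ 5 ≤ n * (8 * K * η) ^ 5 := by gcongr
      _ = 8 ^ 5 * K ^ 5 * (n * η ^ 5) := by ring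
      _ = _ := by rw [hη5, mul_one]
  have hK5 : 0 < K ^ 5 / 12 := by positivity
  have hb : bnd p N ≤ ε := by
    unfold bnd
    have e1 : 1 / (N * p ^ 5) ≤ 12 / K ^ 5 := by
      calc 1 / (N * p ^ 5) ≤ 1 / (K ^ 5 / 12) := one_div_le_one_div_of_le hK5 hlow
        _ = _ := by rw [one_div_div]
    have e2 : (1 + 1 / (N * p ^ 5)) ^ 4 ≤ (1 + 12 / K ^ 5) ^ 4 := by gcongr
    have e3 : p ^ 2 * (1 + N * p ^ 5) ^ 4 ≤ (8 * K * η) ^ 2 * (1 + 8 ^ 5 * K ^ 5) ^ 4 := by gcongr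
    linarith
  obtain ⟨S, hS⟩ := exists_strategy (L := L) hN hNn hp0 hp1 q (by
    calc q + ENNReal.ofReal (bnd p N) ≤ ENNReal.ofReal q.toReal + ENNReal.ofReal ε := by
          rw [ENNReal.ofReal_toReal hqt]
          gcongr
      _ = ENNReal.ofReal (q.toReal + ε) := (ENNReal.ofReal_add ENNReal.toReal_nonneg hε0.le).symm
      _ = 1 := by rw [hε]; simp)
  exact iInf_le_of_le S (sInf_le ⟨20 * L, rfl, hS⟩)

lemma elog_le (x : ℕ∞) (m : ℕ) (hm : 1 ≤ m) (h : x ≤ (m : ℕ∞)) :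
    elog x ≤ ((Real.log m : ℝ) : EReal) := by
  obtain ⟨t, rfl⟩ := ENat.ne_top_iff_exists.mp (ne_top_of_le_ne_top (ENat.natCast_ne_top m) h)
  have htm : t ≤ m := by exact_mod_cast h
  change ((Real.log t : ℝ) : EReal) ≤ _
  rw [EReal.coe_le_coe_iff]
  rcases Nat.eq_zero_or_pos t with rfl | ht
  · simpa using Real.log_natCast_nonneg m
  · exact Real.log_le_log (by exact_mod_cast ht) (by exact_mod_cast htm)

end asymptotics

end K6Bound

open SemiRandomHypergraph in
/-- **Proposition 10.** For the semi-random hypergraph process with `s = 3`, `r = 2`,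
the threshold exponent for creating a copy of the complete `3`-uniform hypergraph
`K_6^{(3)}` on six vertices satisfies `τ^{(2)}_{P_{K_6^{(3)}}} ≤ 9/5`. -/
theorem semiRandom_hypergraph_K6_upper_bound :
    tauExp 2 3
      (Finset.powersetCard 3 (Finset.univ : Finset (Fin 6))) ≤ ((9 / 5 : ℝ) : EReal) := by
  unfold tauExp
  refine iSup₂_le fun q hq => ?_
  obtain ⟨C, hC, hev⟩ := K6Bound.key q hq.2
  have hlim : Tendsto (fun n : ℕ => (((Real.log C * (Real.log n)⁻¹ + 9 / 5 : ℝ)) : EReal)) atTop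
      (nhds (((9 / 5 : ℝ)) : EReal)) := by
    rw [EReal.tendsto_coe]
    have h1 : Tendsto (fun n : ℕ => Real.log (n : ℝ)) atTop atTop :=
      Real.tendsto_log_atTop.comp tendsto_natCast_atTop_atTop
    have h2 := ((h1.inv_tendsto_atTop).const_mul (Real.log C)).add_const (9 / 5 : ℝ)
    simpa using h2
  rw [← hlim.limsup_eq]
  refine limsup_le_limsup ?_
  filter_upwards [hev, eventually_ge_atTop 2] with n ⟨m, hm1, hm2, hm3⟩ hn
  have hnR : (2:ℝ) ≤ n := by exact_mod_cast hn
  have hlog : 0 < Real.log n := Real.log_pos (by linarith)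
  have h1 := K6Bound.elog_le _ m hm1 hm3
  have hinv : (0 : EReal) ≤ (((Real.log n)⁻¹ : ℝ) : EReal) := by
    exact_mod_cast (inv_pos.mpr hlog).le
  refine (mul_le_mul_of_nonneg_right h1 hinv).trans ?_
  rw [← EReal.coe_mul, EReal.coe_le_coe_iff]
  have hη0 : 0 < (n:ℝ) ^ (-(1 / 5) : ℝ) := Real.rpow_pos_of_pos (by linarith) _
  have h2 : Real.log m ≤ Real.log C + 9 / 5 * Real.log n := by
    refine (Real.log_le_log (by exact_mod_cast hm1) hm2).trans (le_of_eq ?_)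
    rw [Real.log_mul hC.ne' (by positivity), Real.log_mul (by positivity) hη0.ne', Real.log_pow,
      Real.log_rpow (by linarith)]
    push_cast; ring
  calc Real.log m * (Real.log n)⁻¹ ≤ (Real.log C + 9 / 5 * Real.log n) * (Real.log n)⁻¹ :=
        mul_le_mul_of_nonneg_right h2 (inv_pos.mpr hlog).le
    _ = _ := by field_simp
end

section
/- Let ℓ ≥ 2, m ≥ 3, s ≥ 2ℓ and 2 ≤ r ≤ s − ℓ be integers, and let G = C_m^{(s,ℓ)} be the ℓ-loose s-uniform cycle with m edges. Then: (i) if r ≤ s − 2ℓ, then τ^{(r)}_{P_G} = 0; (ii) if r ≥ s − 2ℓ + 1, then τ^{(r)}_{P_G} ≥ (r − s + 2ℓ)/3; (iii) if r = s − 2ℓ + 2, then τ^{(r)}_{P_G} = 2/3. -/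
open Filter
open scoped ENNReal

namespace SemiRandomHypergraph

/-- The `ℓ`-loose `s`-uniform cycle `C_m^{(s,ℓ)}` with `m` edges: on the `(s-ℓ)m`
cyclically ordered vertices, the `j`-th edge consists of the `s` consecutive vertices
starting at position `j(s-ℓ)`, so that consecutive edges overlap in exactly `ℓ`
vertices. -/
def looseCycle (s ℓ m : ℕ) : Finset (Finset (ZMod ((s - ℓ) * m))) :=
  (Finset.range m).image fun j =>
    (Finset.range s).image fun i => ((j * (s - ℓ) + i : ℕ) : ZMod ((s - ℓ) * m))

end SemiRandomHypergraph

namespace SemiRandomHypergraph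

/-! ### Counting `r`-subsets -/

lemma card_Col (n r : ℕ) : Fintype.card (Col n r) = n.choose r := by
  simp [Col, Fintype.card_finset_len]

open Classical in
lemma card_hit (n r a : ℕ) (Y : Finset (Fin n)) :
    (Finset.univ.filter fun U : Col n r => a ≤ (U.1 ∩ Y).card).card
      ≤ Y.card ^ a * n ^ (r - a) := by
  have h1 : (Finset.univ.filter fun U : Col n r => a ≤ (U.1 ∩ Y).card).card
      ≤ ((Finset.powersetCard a Y ×ˢ Finset.powersetCard (r - a) (Finset.univ : Finset (Fin n))).image
          fun q => q.1 ∪ q.2).card := by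
    refine Finset.card_le_card_of_injOn (fun U => U.1) ?_ (Subtype.val_injective.injOn)
    intro U hU
    simp only [Finset.coe_filter, Finset.mem_univ, true_and, Set.mem_ofPred_eq] at hU
    obtain ⟨A, hA, hAc⟩ := Finset.exists_subset_card_eq hU
    simp only [Finset.coe_image, Set.mem_image, Finset.mem_coe, Finset.mem_product,
      Finset.mem_powersetCard]
    refine ⟨(A, U.1 \ A), ⟨⟨hA.trans Finset.inter_subset_right, hAc⟩, Finset.subset_univ _, ?_⟩, ?_⟩
    · rw [Finset.card_sdiff_of_subset (hA.trans Finset.inter_subset_left), hAc, U.2]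
    · exact Finset.union_sdiff_of_subset (hA.trans Finset.inter_subset_left)
  refine h1.trans (Finset.card_image_le.trans ?_)
  rw [Finset.card_product, Finset.card_powersetCard, Finset.card_powersetCard]
  refine Nat.mul_le_mul (Nat.choose_le_pow _ _) ?_
  simpa using Nat.choose_le_pow n (r - a)

/-- The constant `r! 2^r`. -/
noncomputable def KK (r : ℕ) : ℝ := r.factorial * 2 ^ r

lemma KK_pos (r : ℕ) : 0 < KK r := by unfold KK; positivity

lemma pow_le_card (n r : ℕ) (h : 2 * r ≤ n) :
    (n : ℝ) ^ r ≤ KK r * (Fintype.card (Col n r) : ℝ) := by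
  rw [card_Col]
  have h1 := Nat.pow_le_choose (α := ℝ) r n
  rw [div_le_iff₀ (by positivity)] at h1
  have h2 : (n : ℝ) ≤ 2 * ((n + 1 - r : ℕ) : ℝ) := by
    have : n ≤ 2 * (n + 1 - r) := by omega
    exact_mod_cast this
  calc (n : ℝ) ^ r ≤ (2 * ((n + 1 - r : ℕ) : ℝ)) ^ r := by gcongr
    _ = 2 ^ r * ((n + 1 - r : ℕ) : ℝ) ^ r := by rw [mul_pow]
    _ ≤ 2 ^ r * ((n.choose r : ℝ) * r.factorial) := by gcongr
    _ = _ := by unfold KK; ring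

open Classical in
lemma frac_hit (n r a : ℕ) (h : 2 * r ≤ n) (hn : 0 < n) (ha : a ≤ r) (Y : Finset (Fin n)) :
    ((Finset.univ.filter fun U : Col n r => a ≤ (U.1 ∩ Y).card).card : ℝ)
      ≤ KK r * ((Y.card : ℝ) / n) ^ a * (Fintype.card (Col n r) : ℝ) := by
  have h1 : ((Finset.univ.filter fun U : Col n r => a ≤ (U.1 ∩ Y).card).card : ℝ)
      ≤ (Y.card : ℝ) ^ a * (n : ℝ) ^ (r - a) := by
    exact_mod_cast card_hit n r a Y
  have h2 := pow_le_card n r h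
  have hn' : (0 : ℝ) < n := by exact_mod_cast hn
  have h3 : (Y.card : ℝ) ^ a * (n : ℝ) ^ (r - a) = ((Y.card : ℝ) / n) ^ a * (n : ℝ) ^ r := by
    rw [div_pow, ← Nat.sub_add_cancel ha, pow_add]
    simp only [Nat.add_sub_cancel]
    field_simp
  rw [h3] at h1
  calc _ ≤ _ := h1
    _ ≤ ((Y.card : ℝ) / n) ^ a * (KK r * (Fintype.card (Col n r) : ℝ)) := by gcongr
    _ = _ := by ring

open Classical in
/-- Most `r`-sets avoid a small set. -/
lemma count_avoid (n r : ℕ) (h : 2 * r ≤ n) (hn : 0 < n) (hr : 1 ≤ r) (Y : Finset (Fin n)) :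
    (1 - KK r * ((Y.card : ℝ) / n)) * (Fintype.card (Col n r) : ℝ) ≤
      ((Finset.univ.filter fun U : Col n r => Disjoint U.1 Y).card : ℝ) := by
  have h1 := frac_hit n r 1 h hn hr Y
  have h2 : (Finset.univ.filter fun U : Col n r => Disjoint U.1 Y).card
     + (Finset.univ.filter fun U : Col n r => 1 ≤ (U.1 ∩ Y).card).card = Fintype.card (Col n r) := by
    rw [← Finset.card_univ, ← Finset.card_filter_add_card_filter_not (s := Finset.univ)
      (fun U : Col n r => Disjoint U.1 Y)]
    congr 2
    ext U
    simp only [Finset.mem_filter, Finset.mem_univ, true_and, Finset.disjoint_iff_inter_eq_empty,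
      ← Finset.card_eq_zero]
    omega
  have h3 : ((Finset.univ.filter fun U : Col n r => Disjoint U.1 Y).card : ℝ)
     + ((Finset.univ.filter fun U : Col n r => 1 ≤ (U.1 ∩ Y).card).card : ℝ)
      = (Fintype.card (Col n r) : ℝ) := by exact_mod_cast h2
  simp only [pow_one] at h1
  linarith

open Classical in
/-- Number of `r`-sets hitting `X₁` and `X₂` once and otherwise avoiding `Z`. -/
lemma count_double (n r : ℕ) (hr : 2 ≤ r) (X₁ X₂ Z : Finset (Fin n)) (h₁ : X₁ ⊆ Z) (h₂ : X₂ ⊆ Z)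
    (h12 : Disjoint X₁ X₂) :
    X₁.card * X₂.card * (n - Z.card).choose (r - 2) ≤
      (Finset.univ.filter fun U : Col n r => ∃ x₁ ∈ X₁, ∃ x₂ ∈ X₂, ∃ R : Finset (Fin n),
        Disjoint R Z ∧ U.1 = insert x₁ (insert x₂ R)).card := by
  have hc : (X₁ ×ˢ X₂ ×ˢ Finset.powersetCard (r - 2) Zᶜ).card =
      X₁.card * X₂.card * (n - Z.card).choose (r - 2) := by
    simp [Finset.card_product, Finset.card_powersetCard, Finset.card_compl, mul_assoc]
  have key : ∀ q ∈ X₁ ×ˢ X₂ ×ˢ Finset.powersetCard (r - 2) Zᶜ,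
      (insert q.1 (insert q.2.1 q.2.2)).card = r ∧ Disjoint q.2.2 Z ∧ q.1 ∈ X₁ ∧ q.2.1 ∈ X₂ := by
    rintro ⟨x, y, R⟩ hq
    simp only [Finset.mem_product, Finset.mem_powersetCard] at hq
    obtain ⟨hx, hy, hR, hRc⟩ := hq
    have hd : Disjoint R Z := by
      rw [Finset.disjoint_left]; intro v hv; simpa using hR hv
    have hxy : x ≠ y := by
      rintro rfl; exact Finset.disjoint_left.1 h12 hx hy
    refine ⟨?_, hd, hx, hy⟩
    dsimp only
    rw [Finset.card_insert_of_notMem, Finset.card_insert_of_notMem, hRc]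
    · omega
    · exact fun h => Finset.disjoint_left.1 hd h (h₂ hy)
    · simp only [Finset.mem_insert, not_or]
      exact ⟨hxy, fun h => Finset.disjoint_left.1 hd h (h₁ hx)⟩
  rw [← hc, ← Finset.card_map (Function.Embedding.subtype _)]
  refine Finset.card_le_card_of_injOn (fun q => insert q.1 (insert q.2.1 q.2.2)) ?_ ?_
  · intro q hq
    obtain ⟨h1, h2, h3, h4⟩ := key q hq
    simp only [Finset.coe_map, Set.mem_image, Finset.mem_coe, Finset.mem_filter, Finset.mem_univ,
      true_and]
    exact ⟨⟨_, h1⟩, ⟨q.1, h3, q.2.1, h4, q.2.2, h2, rfl⟩, rfl⟩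
  · intro q hq q' hq' he
    obtain ⟨-, h2, h3, h4⟩ := key q hq
    obtain ⟨-, h2', h3', h4'⟩ := key q' hq'
    obtain ⟨x, y, R⟩ := q
    obtain ⟨x', y', R'⟩ := q'
    simp only at h2 h3 h4 h2' h3' h4' he
    have e1 : ∀ x y : Fin n, ∀ R, x ∈ X₁ → y ∈ X₂ → Disjoint R Z →
        insert x (insert y R) ∩ X₁ = {x} ∧ insert x (insert y R) ∩ X₂ = {y} ∧
        insert x (insert y R) \ Z = R := by
      intro x y R hx hy hR
      have hR' := Finset.disjoint_left.1 hR
      have hd := Finset.disjoint_left.1 h12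
      refine ⟨?_, ?_, ?_⟩
      · ext v
        simp only [Finset.mem_inter, Finset.mem_insert, Finset.mem_singleton]
        constructor
        · rintro ⟨rfl | rfl | h, h'⟩
          · rfl
          · exact absurd hy (hd h')
          · exact absurd (h₁ h') (hR' h)
        · rintro rfl; exact ⟨Or.inl rfl, hx⟩
      · ext v
        simp only [Finset.mem_inter, Finset.mem_insert, Finset.mem_singleton]
        constructor
        · rintro ⟨rfl | rfl | h, h'⟩
          · exact absurd h' (hd hx)
          · rfl
          · exact absurd (h₂ h') (hR' h)
        · rintro rfl; exact ⟨Or.inr (Or.inl rfl), hy⟩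
      · ext v
        simp only [Finset.mem_sdiff, Finset.mem_insert]
        constructor
        · rintro ⟨rfl | rfl | h, h'⟩
          · exact absurd (h₁ hx) h'
          · exact absurd (h₂ hy) h'
          · exact h
        · intro h; exact ⟨Or.inr (Or.inr h), hR' h⟩
    obtain ⟨a1, a2, a3⟩ := e1 x y R h3 h4 h2
    obtain ⟨b1, b2, b3⟩ := e1 x' y' R' h3' h4' h2'
    rw [he, b1] at a1
    rw [he, b2] at a2
    rw [he, b3] at a3
    rw [Finset.singleton_inj] at a1 a2
    rw [a1, a2, a3]

end SemiRandomHypergraph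

namespace SemiRandomHypergraph

/-! ### Lower bound -/

lemma outer_le_one {α : Type*} (p : PMF α) (A : Set α) : p.toOuterMeasure A ≤ 1 := by
  rw [PMF.toOuterMeasure_apply, ← p.tsum_coe]
  exact ENNReal.tsum_le_tsum fun a => Set.indicator_le_self _ _ a

lemma history_length {n r s : ℕ} (h : Nonempty (Col n r)) (S : Strategy n r s) :
    ∀ (t : ℕ) (l : List (Step n r s)), historyPMF h S t l ≠ 0 → l.length = t
  | 0, l, hl => by
      have : l ∈ (historyPMF h S 0).support := (PMF.mem_support_iff _ _).2 hl
      simp [historyPMF] at this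
      simp [this]
  | t + 1, l, hl => by
      have : l ∈ (historyPMF h S (t + 1)).support := (PMF.mem_support_iff _ _).2 hl
      simp only [historyPMF, PMF.mem_support_bind_iff, PMF.mem_support_map_iff] at this
      obtain ⟨h0, hh0, U, -, W, -, rfl⟩ := this
      have := history_length h S t h0 ((PMF.mem_support_iff _ _).1 hh0)
      simp [this]

/-- The vertex set of an edge. -/
def edgeSet {n r s : ℕ} (p : Step n r s) : Finset (Fin n) := p.1.1 ∪ p.2.1

/-- Some round's random set hits two earlier edges in at least `a` vertices. -/
def Bad {n r s : ℕ} (a : ℕ) : List (Step n r s) → Prop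
  | [] => False
  | p :: h => Bad a h ∨ ∃ p₁ ∈ h, ∃ p₂ ∈ h, a ≤ (p.1.1 ∩ (edgeSet p₁ ∪ edgeSet p₂)).card

open Classical in
lemma prob_new (n r s a : ℕ) (h : 2 * r ≤ n) (hn : 0 < n) (ha : a ≤ r) (hrs : r ≤ s)
    (hist : List (Step n r s)) :
    ((Finset.univ.filter fun U : Col n r => ∃ p₁ ∈ hist, ∃ p₂ ∈ hist,
      a ≤ (U.1 ∩ (edgeSet p₁ ∪ edgeSet p₂)).card).card : ℝ) ≤
      (hist.length : ℝ) ^ 2 * (KK r * ((2 * s : ℝ) / n) ^ a) * (Fintype.card (Col n r) : ℝ) := by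
  have hsub : (Finset.univ.filter fun U : Col n r => ∃ p₁ ∈ hist, ∃ p₂ ∈ hist,
      a ≤ (U.1 ∩ (edgeSet p₁ ∪ edgeSet p₂)).card) ⊆
      (hist.toFinset ×ˢ hist.toFinset).biUnion fun q =>
        Finset.univ.filter fun U : Col n r => a ≤ (U.1 ∩ (edgeSet q.1 ∪ edgeSet q.2)).card := by
    intro U hU
    simp only [Finset.mem_filter, Finset.mem_univ, true_and] at hU
    obtain ⟨p₁, h₁, p₂, h₂, hU⟩ := hU
    simp only [Finset.mem_biUnion, Finset.mem_product, List.mem_toFinset, Finset.mem_filter,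
      Finset.mem_univ, true_and]
    exact ⟨(p₁, p₂), ⟨h₁, h₂⟩, hU⟩
  have h1 := (Finset.card_le_card hsub).trans Finset.card_biUnion_le
  have hes : ∀ p : Step n r s, (edgeSet p).card ≤ s := by
    intro p
    refine (Finset.card_union_le _ _).trans ?_
    rw [p.1.2, p.2.2]; omega
  set C : ℝ := KK r * ((2 * s : ℝ) / n) ^ a * (Fintype.card (Col n r) : ℝ) with hC
  have hC0 : 0 ≤ C := by have := KK_pos r; positivity
  calc ((Finset.univ.filter fun U : Col n r => ∃ p₁ ∈ hist, ∃ p₂ ∈ hist,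
      a ≤ (U.1 ∩ (edgeSet p₁ ∪ edgeSet p₂)).card).card : ℝ)
      ≤ ((∑ q ∈ hist.toFinset ×ˢ hist.toFinset, (Finset.univ.filter fun U : Col n r =>
        a ≤ (U.1 ∩ (edgeSet q.1 ∪ edgeSet q.2)).card).card : ℕ) : ℝ) := by exact_mod_cast h1
    _ = ∑ q ∈ hist.toFinset ×ˢ hist.toFinset, ((Finset.univ.filter fun U : Col n r =>
        a ≤ (U.1 ∩ (edgeSet q.1 ∪ edgeSet q.2)).card).card : ℝ) := by push_cast; rfl
    _ ≤ ∑ q ∈ hist.toFinset ×ˢ hist.toFinset, C := by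
        refine Finset.sum_le_sum fun q _ => ?_
        refine (frac_hit n r a h hn ha _).trans ?_
        have h2 : ((edgeSet q.1 ∪ edgeSet q.2).card : ℝ) ≤ 2 * s := by
          have := (Finset.card_union_le (edgeSet q.1) (edgeSet q.2))
          have h3 := hes q.1
          have h4 := hes q.2
          have : (edgeSet q.1 ∪ edgeSet q.2).card ≤ 2 * s := by omega
          exact_mod_cast this
        rw [hC]
        have := (KK_pos r).le
        gcongr
    _ = ((hist.toFinset.card : ℝ) ^ 2) * C := by
        rw [Finset.sum_const, Finset.card_product, nsmul_eq_mul]; push_cast; ring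
    _ ≤ (hist.length : ℝ) ^ 2 * C := by
        have := List.toFinset_card_le hist
        gcongr
    _ = _ := by rw [hC]; ring

open Classical in
lemma prob_bad (n r s a : ℕ) (h : 2 * r ≤ n) (hn : 0 < n) (ha : a ≤ r) (hrs : r ≤ s)
    (hne : Nonempty (Col n r)) (S : Strategy n r s) (t : ℕ) :
    (historyPMF hne S t).toOuterMeasure {l | Bad a l} ≤
      ENNReal.ofReal ((t : ℝ) ^ 3 * (KK r * ((2 * s : ℝ) / n) ^ a)) := by
  set κ : ℝ := KK r * ((2 * s : ℝ) / n) ^ a with hκ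
  have hκ0 : 0 ≤ κ := by have := KK_pos r; positivity
  induction t with
  | zero => simp [historyPMF, PMF.toOuterMeasure_pure_apply, Bad]
  | succ t ih =>
    have hcard : (0 : ℝ) < (Fintype.card (Col n r) : ℝ) := by
      exact_mod_cast Fintype.card_pos
    have hstep : ∀ l : List (Step n r s), historyPMF hne S t l *
        ((@PMF.uniformOfFintype (Col n r) _ hne).bind fun U =>
          (S l U).map fun W => (U, W) :: l).toOuterMeasure {l | Bad a l} ≤
        {l | Bad a l}.indicator (historyPMF hne S t) l +
          historyPMF hne S t l * ENNReal.ofReal ((t : ℝ) ^ 2 * κ) := by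
      intro l
      by_cases hl0 : historyPMF hne S t l = 0
      · simp [hl0]
      have hlen := history_length hne S t l hl0
      by_cases hb : Bad a l
      · rw [Set.indicator_of_mem (by exact hb)]
        refine le_trans ?_ le_self_add
        refine mul_le_of_le_one_right' ?_
        exact outer_le_one _ _
      · rw [Set.indicator_of_notMem (by exact hb), zero_add]
        gcongr
        rw [PMF.toOuterMeasure_bind_apply, tsum_fintype]
        have hb2 : ∀ U : Col n r, (@PMF.uniformOfFintype (Col n r) _ hne) U *
            ((S l U).map fun W => (U, W) :: l).toOuterMeasure {l | Bad a l} ≤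
            if (∃ p₁ ∈ l, ∃ p₂ ∈ l, a ≤ (U.1 ∩ (edgeSet p₁ ∪ edgeSet p₂)).card) then
              ((Fintype.card (Col n r) : ℝ≥0∞))⁻¹ else 0 := by
          intro U
          rw [PMF.uniformOfFintype_apply]
          split_ifs with hU
          · refine mul_le_of_le_one_right' ?_
            exact outer_le_one _ _
          · rw [PMF.toOuterMeasure_map_apply]
            have : ((fun W => (U, W) :: l) ⁻¹' {l | Bad a l} : Set (Col n (s - r))) = ∅ := by
              ext W
              simp only [Set.mem_preimage, Set.mem_ofPred_eq, Bad, Set.mem_empty_iff_false, iff_false,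
                not_or]
              exact ⟨hb, hU⟩
            rw [this]; simp
        refine (Finset.sum_le_sum fun U _ => hb2 U).trans ?_
        rw [← Finset.sum_filter, Finset.sum_const, nsmul_eq_mul, ← div_eq_mul_inv]
        refine ENNReal.div_le_of_le_mul ?_
        have h1 := prob_new n r s a h hn ha hrs l
        rw [hlen] at h1
        rw [← ENNReal.ofReal_natCast, ← ENNReal.ofReal_natCast, ← ENNReal.ofReal_mul (by positivity)]
        exact ENNReal.ofReal_le_ofReal h1
    rw [historyPMF, PMF.toOuterMeasure_bind_apply]
    refine (ENNReal.tsum_le_tsum hstep).trans ?_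
    rw [ENNReal.tsum_add, ENNReal.tsum_mul_right, PMF.tsum_coe, one_mul,
      ← PMF.toOuterMeasure_apply]
    refine (add_le_add_left ih _).trans ?_
    rw [← ENNReal.ofReal_add (by positivity) (by positivity)]
    refine ENNReal.ofReal_le_ofReal ?_
    push_cast
    have ht : (0 : ℝ) ≤ t := by positivity
    have : (t : ℝ) ^ 3 + t ^ 2 ≤ (t + 1) ^ 3 := by nlinarith [sq_nonneg (t : ℝ)]
    nlinarith

/-! ### Structure of the loose cycle -/

/-- The `j`-th edge, for arbitrary natural `j`. -/
def cedge (s ℓ m j : ℕ) : Finset (ZMod ((s - ℓ) * m)) :=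
  (Finset.range s).image fun i => ((j * (s - ℓ) + i : ℕ) : ZMod ((s - ℓ) * m))

lemma cedge_mem (s ℓ m j : ℕ) (hm : 0 < m) : cedge s ℓ m j ∈ looseCycle s ℓ m := by
  unfold looseCycle
  rw [Finset.mem_image]
  refine ⟨j % m, Finset.mem_range.2 (Nat.mod_lt _ hm), ?_⟩
  unfold cedge
  refine Finset.image_congr ?_
  intro i _
  simp only
  rw [ZMod.natCast_eq_natCast_iff]
  refine Nat.ModEq.add_right _ ?_
  have : j % m * (s - ℓ) ≡ j * (s - ℓ) [MOD m * (s - ℓ)] :=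
    Nat.ModEq.mul_right' _ (Nat.mod_modEq j m)
  rwa [mul_comm m] at this

lemma cedge_ne (s ℓ m j : ℕ) (hℓ : 1 ≤ ℓ) (hm : 3 ≤ m) (hs : 2 * ℓ ≤ s) :
    cedge s ℓ m j ≠ cedge s ℓ m (j + 1) := by
  intro he
  have h1 : ((j * (s - ℓ) + 0 : ℕ) : ZMod ((s - ℓ) * m)) ∈ cedge s ℓ m j :=
    Finset.mem_image.2 ⟨0, Finset.mem_range.2 (by omega), rfl⟩
  rw [he] at h1
  obtain ⟨i, hi, h2⟩ := Finset.mem_image.1 h1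
  rw [Finset.mem_range] at hi
  rw [ZMod.natCast_eq_natCast_iff, add_mul, add_assoc] at h2
  have h3 := Nat.ModEq.add_left_cancel' _ h2
  have h4 := (Nat.modEq_zero_iff_dvd.1 h3)
  have h5 := Nat.le_of_dvd (by omega) h4
  have h6 : (s - ℓ) * 3 ≤ (s - ℓ) * m := Nat.mul_le_mul_left _ hm
  omega

lemma exists_nbrs (s ℓ m : ℕ) (hℓ : 1 ≤ ℓ) (hm : 3 ≤ m) (hs : 2 * ℓ ≤ s)
    (e : Finset (ZMod ((s - ℓ) * m))) (he : e ∈ looseCycle s ℓ m) :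
    e.card = s ∧ ∃ f ∈ looseCycle s ℓ m, ∃ g ∈ looseCycle s ℓ m, f ≠ e ∧ g ≠ e ∧
      2 * ℓ ≤ (e ∩ (f ∪ g)).card := by
  obtain ⟨j, -, rfl⟩ := Finset.mem_image.1 he
  have hej : cedge s ℓ m (j + m - 1 + 1) = ((Finset.range s).image fun i =>
      ((j * (s - ℓ) + i : ℕ) : ZMod ((s - ℓ) * m))) := by
    unfold cedge
    refine Finset.image_congr fun i _ => ?_
    rw [ZMod.natCast_eq_natCast_iff, show j + m - 1 + 1 = j + m by omega]
    refine Nat.ModEq.add_right _ ?_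
    rw [add_mul, mul_comm m]
    simp [Nat.ModEq]
  rw [← hej]
  set j' := j + m - 1 with hj'
  have h6 : (s - ℓ) * 3 ≤ (s - ℓ) * m := Nat.mul_le_mul_left _ hm
  have hinj : Set.InjOn (fun i : ℕ => (((j' + 1) * (s - ℓ) + i : ℕ) : ZMod ((s - ℓ) * m)))
      (Finset.range s) := by
    intro i hi i' hi' h
    simp only [Finset.coe_range, Set.mem_Iio] at hi hi'
    simp only at h
    rw [ZMod.natCast_eq_natCast_iff] at h
    exact Nat.ModEq.eq_of_lt_of_lt (Nat.ModEq.add_left_cancel' _ h) (by omega) (by omega)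
  refine ⟨?_, cedge s ℓ m j', cedge_mem _ _ _ _ (by omega), cedge s ℓ m (j' + 1 + 1),
    cedge_mem _ _ _ _ (by omega), cedge_ne s ℓ m j' hℓ hm hs, (cedge_ne s ℓ m (j' + 1) hℓ hm hs).symm, ?_⟩
  · unfold cedge
    rw [Finset.card_image_of_injOn hinj, Finset.card_range]
  · have hc : (Finset.range ℓ ∪ Finset.Ico (s - ℓ) s).card = 2 * ℓ := by
      rw [Finset.card_union_of_disjoint, Finset.card_range, Nat.card_Ico]
      · omega
      · rw [Finset.disjoint_left]; intro x; simp only [Finset.mem_range, Finset.mem_Ico]; omega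
    have hsub : Finset.range ℓ ∪ Finset.Ico (s - ℓ) s ⊆ Finset.range s := by
      intro x; simp only [Finset.mem_union, Finset.mem_range, Finset.mem_Ico]; omega
    rw [← hc, ← Finset.card_image_of_injOn (hinj.mono (by exact_mod_cast hsub))]
    refine Finset.card_le_card ?_
    intro v hv
    obtain ⟨i, hi, rfl⟩ := Finset.mem_image.1 hv
    rw [Finset.mem_inter, Finset.mem_union]
    refine ⟨Finset.mem_image.2 ⟨i, hsub hi, rfl⟩, ?_⟩
    rcases Finset.mem_union.1 hi with hi | hi
    · left
      rw [Finset.mem_range] at hi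
      refine Finset.mem_image.2 ⟨(s - ℓ) + i, Finset.mem_range.2 (by omega), ?_⟩
      congr 1; ring
    · right
      rw [Finset.mem_Ico] at hi
      refine Finset.mem_image.2 ⟨i - (s - ℓ), Finset.mem_range.2 (by omega), ?_⟩
      congr 1
      have : i = (i - (s - ℓ)) + (s - ℓ) := by omega
      conv_rhs => rw [this]
      ring

lemma edge_eq {V : Type*} {n r s : ℕ} (φ : V ↪ Fin n) (e : Finset V) (p : Step n r s)
    (h : Multiset.map (φ : V → Fin n) e.val = p.1.1.val + p.2.1.val) :
    e.map φ = edgeSet p := by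
  ext v
  have : v ∈ Multiset.map (φ : V → Fin n) e.val ↔ v ∈ p.1.1.val + p.2.1.val := by rw [h]
  rw [Multiset.mem_add] at this
  rw [← Finset.mem_val, Finset.map_val, this, edgeSet, Finset.mem_union, Finset.mem_val, Finset.mem_val]

lemma contains_bad (s ℓ m r n : ℕ) (hℓ : 1 ≤ ℓ) (hm : 3 ≤ m) (hs : 2 * ℓ ≤ s)
    (hist : List (Step n r s)) (h : ContainsCopy (looseCycle s ℓ m) hist) :
    Bad (r + 2 * ℓ - s) hist := by
  obtain ⟨φ, h⟩ := h
  induction hist with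
  | nil =>
    obtain ⟨p, hp, -⟩ := h _ (cedge_mem s ℓ m 0 (by omega))
    simp at hp
  | cons p hist ih =>
    by_cases hc : ∀ e ∈ looseCycle s ℓ m, ∃ p ∈ hist,
        Multiset.map (φ : _ → Fin n) e.val = p.1.1.val + p.2.1.val
    · exact Or.inl (ih hc)
    right
    push Not at hc
    obtain ⟨e, he, hne⟩ := hc
    have hep : Multiset.map (φ : _ → Fin n) e.val = p.1.1.val + p.2.1.val := by
      obtain ⟨p', hp', hh⟩ := h e he
      rcases List.mem_cons.1 hp' with rfl | hp'
      · exact hh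
      · exact absurd hh (hne p' hp')
    have hoth : ∀ f ∈ looseCycle s ℓ m, f ≠ e → ∃ p ∈ hist, f.map φ = edgeSet p := by
      intro f hf hfe
      obtain ⟨p', hp', hh⟩ := h f hf
      rcases List.mem_cons.1 hp' with rfl | hp'
      · exfalso; apply hfe
        have := (edge_eq φ f p' hh).trans (edge_eq φ e p' hep).symm
        exact Finset.map_injective φ this
      · exact ⟨p', hp', edge_eq φ f p' hh⟩
    obtain ⟨hec, f, hf, g, hg, hfe, hge, hcard⟩ := exists_nbrs s ℓ m hℓ hm hs e he
    obtain ⟨p₁, hp₁, h₁⟩ := hoth f hf hfe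
    obtain ⟨p₂, hp₂, h₂⟩ := hoth g hg hge
    refine ⟨p₁, hp₁, p₂, hp₂, ?_⟩
    rw [← h₁, ← h₂, ← Finset.map_union]
    have hee := edge_eq φ e p hep
    have hU : p.1.1 ⊆ e.map φ := by rw [hee]; exact Finset.subset_union_left
    have hI : (e ∩ (f ∪ g)).map φ ⊆ e.map φ := Finset.map_subset_map.2 Finset.inter_subset_left
    have hsub : p.1.1 ∩ (e ∩ (f ∪ g)).map φ ⊆ p.1.1 ∩ (f ∪ g).map φ :=
      Finset.inter_subset_inter_left (Finset.map_subset_map.2 Finset.inter_subset_right)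
    refine le_trans ?_ (Finset.card_le_card hsub)
    have h3 := Finset.card_union_add_card_inter p.1.1 ((e ∩ (f ∪ g)).map φ)
    have h4 := Finset.card_le_card (Finset.union_subset hU hI)
    rw [Finset.card_map, p.1.2] at h3
    rw [Finset.card_map, hec] at h4
    omega

lemma lower_prob (s ℓ m r n : ℕ) (hℓ : 1 ≤ ℓ) (hm : 3 ≤ m) (hs : 2 * ℓ ≤ s) (hrs : r ≤ s)
    (h : 2 * r ≤ n) (hn : 0 < n) (S : Strategy n r s) (t : ℕ) :
    probContains n r s (looseCycle s ℓ m) S t ≤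
      ENNReal.ofReal ((t : ℝ) ^ 3 * (KK r * ((2 * s : ℝ) / n) ^ (r + 2 * ℓ - s))) := by
  unfold probContains
  have hrn : r ≤ n := by omega
  rw [dif_pos hrn]
  refine le_trans ?_ (prob_bad n r s (r + 2 * ℓ - s) h hn (by omega) hrs (col_nonempty hrn) S t)
  exact MeasureTheory.OuterMeasure.mono _ fun l hl => contains_bad s ℓ m r n hℓ hm hs l hl

end SemiRandomHypergraph

namespace SemiRandomHypergraph

/-! ### Optimal play -/

open Classical in
/-- Success probability under optimal play with `T` remaining rounds. -/
noncomputable def Wv {n r s : ℕ} (Q : List (Step n r s) → Prop) : ℕ → List (Step n r s) → ℝ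
  | 0, h => if Q h then 1 else 0
  | T + 1, h => (∑ U : Col n r, ⨆ V : Col n (s - r), Wv Q T ((U, V) :: h)) /
      (Fintype.card (Col n r) : ℝ)

section

variable {n r s : ℕ} (Q : List (Step n r s) → Prop)

lemma Wv_le_sup (T : ℕ) (h : List (Step n r s)) (U : Col n r) (V : Col n (s - r)) :
    Wv Q T ((U, V) :: h) ≤ ⨆ V : Col n (s - r), Wv Q T ((U, V) :: h) :=
  le_ciSup (f := fun V : Col n (s - r) => Wv Q T ((U, V) :: h)) (Set.finite_range _).bddAbove V

lemma Wv_nonneg (T : ℕ) : ∀ h, 0 ≤ Wv Q T h := by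
  induction T with
  | zero => intro h; unfold Wv; split_ifs <;> simp
  | succ T ih =>
    intro h
    unfold Wv
    refine div_nonneg (Finset.sum_nonneg fun U _ => Real.iSup_nonneg fun V => ih _) (by positivity)

lemma Wv_mono_hist (hQ : ∀ h h', h ⊆ h' → Q h → Q h') (hV : Nonempty (Col n (s - r))) (T : ℕ) :
    ∀ h h', h ⊆ h' → Wv Q T h ≤ Wv Q T h' := by
  induction T with
  | zero =>
    intro h h' hh
    unfold Wv
    by_cases h1 : Q h
    · rw [if_pos h1, if_pos (hQ h h' hh h1)]
    · rw [if_neg h1]; split_ifs <;> simp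
  | succ T ih =>
    intro h h' hh
    unfold Wv
    refine div_le_div_of_nonneg_right (Finset.sum_le_sum fun U _ => ?_) (by positivity)
    refine ciSup_le fun V => ?_
    exact (ih _ _ (List.cons_subset_cons _ hh)).trans (Wv_le_sup Q T h' U V)

lemma Wv_mono_succ (hQ : ∀ h h', h ⊆ h' → Q h → Q h') (hU : Nonempty (Col n r))
    (hV : Nonempty (Col n (s - r))) (T : ℕ) (h : List (Step n r s)) :
    Wv Q T h ≤ Wv Q (T + 1) h := by
  have hc : (0 : ℝ) < (Fintype.card (Col n r) : ℝ) := by exact_mod_cast Fintype.card_pos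
  rw [Wv, le_div_iff₀ hc]
  calc Wv Q T h * (Fintype.card (Col n r) : ℝ) = ∑ U : Col n r, Wv Q T h := by
        rw [Finset.sum_const, Finset.card_univ, nsmul_eq_mul, mul_comm]
    _ ≤ _ := by
        refine Finset.sum_le_sum fun U _ => ?_
        obtain ⟨V⟩ := hV
        exact (Wv_mono_hist Q hQ ⟨V⟩ T _ _ (List.subset_cons_self _ _)).trans (Wv_le_sup Q T h U V)

lemma Wv_mono_add (hQ : ∀ h h', h ⊆ h' → Q h → Q h') (hU : Nonempty (Col n r))
    (hV : Nonempty (Col n (s - r))) (L T : ℕ) (h : List (Step n r s)) :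
    Wv Q T h ≤ Wv Q (L + T) h := by
  induction L with
  | zero => simp
  | succ L ih => rw [show L + 1 + T = (L + T) + 1 by ring]; exact ih.trans (Wv_mono_succ Q hQ hU hV _ _)

open Classical in
/-- Retrying for `L` rounds. -/
lemma retry (hQ : ∀ h h', h ⊆ h' → Q h → Q h') (hU : Nonempty (Col n r))
    (hV : Nonempty (Col n (s - r))) (T : ℕ) (h : List (Step n r s)) (w δ : ℝ) (hw : 0 ≤ w)
    (hδ : 0 ≤ δ)
    (hg : (1 - δ) * (Fintype.card (Col n r) : ℝ) ≤
      ((Finset.univ.filter fun U : Col n r => ∃ V, w ≤ Wv Q T ((U, V) :: h)).card : ℝ)) (L : ℕ) :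
    (1 - δ ^ L) * w ≤ Wv Q (L + T) h := by
  have hc : (0 : ℝ) < (Fintype.card (Col n r) : ℝ) := by exact_mod_cast Fintype.card_pos
  induction L with
  | zero => simpa using Wv_nonneg Q _ h
  | succ L ih =>
    rw [show L + 1 + T = (L + T) + 1 by ring, Wv, le_div_iff₀ hc]
    set G := Finset.univ.filter fun U : Col n r => ∃ V, w ≤ Wv Q T ((U, V) :: h) with hG
    have h1 : ∀ U : Col n r, (if U ∈ G then w else (1 - δ ^ L) * w) ≤
        ⨆ V : Col n (s - r), Wv Q (L + T) ((U, V) :: h) := by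
      intro U
      split_ifs with hUG
      · obtain ⟨V, hV'⟩ := (Finset.mem_filter.1 hUG).2
        exact (hV'.trans (Wv_mono_add Q hQ hU hV L T _)).trans (Wv_le_sup Q (L + T) h U V)
      · obtain ⟨V⟩ := hV
        exact ih.trans ((Wv_mono_hist Q hQ ⟨V⟩ _ _ _ (List.subset_cons_self _ _)).trans
          (Wv_le_sup Q (L + T) h U V))
    refine le_trans ?_ (Finset.sum_le_sum fun U _ => h1 U)
    have h2 : ∀ U : Col n r, (if U ∈ G then w else (1 - δ ^ L) * w) =
        (1 - δ ^ L) * w + (if U ∈ G then δ ^ L * w else 0) := by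
      intro U; split_ifs <;> ring
    rw [Finset.sum_congr rfl fun U _ => h2 U, Finset.sum_add_distrib, Finset.sum_const,
      Finset.card_univ, nsmul_eq_mul, Finset.sum_ite_mem, Finset.univ_inter, Finset.sum_const,
      nsmul_eq_mul]
    have h3 : 0 ≤ δ ^ L * w := by positivity
    have h4 := mul_le_mul_of_nonneg_right hg h3
    rw [pow_succ]
    nlinarith

open Classical in
/-- Passing through `N` levels with `L` rounds for each level. -/
lemma levels (hQ : ∀ h h', h ⊆ h' → Q h → Q h') (hU : Nonempty (Col n r))
    (hV : Nonempty (Col n (s - r))) (G : ℕ → List (Step n r s) → Prop) (T L : ℕ) (w δ : ℝ)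
    (hw : 0 ≤ w) (hδ : 0 ≤ δ) (hδ1 : δ ≤ 1) (N : ℕ)
    (hend : ∀ h, G N h → w ≤ Wv Q T h)
    (hg : ∀ k < N, ∀ h, G k h → (1 - δ) * (Fintype.card (Col n r) : ℝ) ≤
      ((Finset.univ.filter fun U : Col n r => ∃ V, G (k + 1) ((U, V) :: h)).card : ℝ)) :
    ∀ h, G 0 h → (1 - δ ^ L) ^ N * w ≤ Wv Q (N * L + T) h := by
  have h0 : 0 ≤ 1 - δ ^ L := by
    have := pow_le_one₀ (n := L) hδ hδ1
    linarith
  have key : ∀ j ≤ N, ∀ h, G (N - j) h → (1 - δ ^ L) ^ j * w ≤ Wv Q (j * L + T) h := by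
    intro j
    induction j with
    | zero => intro _ h hG; simpa using hend h hG
    | succ j ih =>
      intro hj h hG
      have h1 := hg (N - (j + 1)) (by omega) h hG
      rw [show N - (j + 1) + 1 = N - j by omega] at h1
      have := retry Q hQ hU hV (j * L + T) h ((1 - δ ^ L) ^ j * w) δ (by positivity) hδ
        (h1.trans ?_) L
      · rw [show (j + 1) * L + T = L + (j * L + T) by ring]
        refine le_trans (le_of_eq ?_) this
        ring
      · have : (Finset.univ.filter fun U : Col n r => ∃ V, G (N - j) ((U, V) :: h)).card ≤
          (Finset.univ.filter fun U : Col n r => ∃ V, (1 - δ ^ L) ^ j * w ≤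
            Wv Q (j * L + T) ((U, V) :: h)).card := by
          refine Finset.card_le_card fun U hU => ?_
          obtain ⟨V, hV⟩ := (Finset.mem_filter.1 hU).2
          exact Finset.mem_filter.2 ⟨Finset.mem_univ _, V, ih (by omega) _ hV⟩
        exact_mod_cast this
  intro h hG
  exact key N le_rfl h (by simpa using hG)

open Classical in
lemma exists_strategy (hU : Nonempty (Col n r)) (hV : Nonempty (Col n (s - r))) (t : ℕ) :
    ∃ S : Strategy n r s, ENNReal.ofReal (Wv Q t []) ≤
      (historyPMF hU S t).toOuterMeasure {l | Q l} := by
  have hc : (0 : ℝ) < (Fintype.card (Col n r) : ℝ) := by exact_mod_cast Fintype.card_pos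
  have hmax : ∀ (l : List (Step n r s)) (U : Col n r), ∃ V : Col n (s - r),
      Wv Q (t - l.length - 1) ((U, V) :: l) =
        ⨆ V : Col n (s - r), Wv Q (t - l.length - 1) ((U, V) :: l) := fun l U =>
    exists_eq_ciSup_of_finite
  choose σ hσ using hmax
  let S : Strategy n r s := fun l U => PMF.pure (σ l U)
  refine ⟨S, ?_⟩
  have key : ∀ k ≤ t, ENNReal.ofReal (Wv Q t []) ≤
      ∑' l, historyPMF hU S k l * ENNReal.ofReal (Wv Q (t - k) l) := by
    intro k
    induction k with
    | zero =>
      intro _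
      rw [historyPMF, tsum_eq_single ([] : List (Step n r s))]
      · simp
      · intro l hl; simp [PMF.pure_apply, hl]
    | succ k ih =>
      intro hk
      refine (ih (by omega)).trans ?_
      have e1 : historyPMF hU S (k + 1) = (historyPMF hU S k).bind fun l =>
          (@PMF.uniformOfFintype (Col n r) _ hU).bind fun U => PMF.pure ((U, σ l U) :: l) := by
        rw [historyPMF]
        congr 1; funext l; congr 1; funext U
        simp only [S, PMF.pure_map]
      have e2 : ∀ (p : PMF (List (Step n r s))) (f : List (Step n r s) → PMF (List (Step n r s)))
          (g : List (Step n r s) → ℝ≥0∞), ∑' l, (p.bind f) l * g l = ∑' a, p a * ∑' l, f a l * g l := by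
        intro p f g
        simp only [PMF.bind_apply, ← ENNReal.tsum_mul_right, ← ENNReal.tsum_mul_left]
        rw [ENNReal.tsum_comm]
        simp only [mul_assoc]
      have e3 : ∀ (p : PMF (Col n r)) (f : Col n r → PMF (List (Step n r s)))
          (g : List (Step n r s) → ℝ≥0∞), ∑' l, (p.bind f) l * g l = ∑' a, p a * ∑' l, f a l * g l := by
        intro p f g
        simp only [PMF.bind_apply, ← ENNReal.tsum_mul_right, ← ENNReal.tsum_mul_left]
        rw [ENNReal.tsum_comm]
        simp only [mul_assoc]
      rw [e1, e2]
      refine ENNReal.tsum_le_tsum fun l => ?_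
      by_cases hl0 : historyPMF hU S k l = 0
      · simp [hl0]
      have hlen := history_length hU S k l hl0
      gcongr
      rw [e3, tsum_fintype]
      have e4 : ∀ U : Col n r, ∑' l', (PMF.pure ((U, σ l U) :: l)) l' *
          ENNReal.ofReal (Wv Q (t - (k + 1)) l') =
          ENNReal.ofReal (⨆ V : Col n (s - r), Wv Q (t - (k + 1)) ((U, V) :: l)) := by
        intro U
        rw [tsum_eq_single ((U, σ l U) :: l)]
        · have := hσ l U
          rw [hlen, Nat.sub_sub] at this
          simp [this]
        · intro l' hl'; simp [PMF.pure_apply, hl']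
      simp only [e4, PMF.uniformOfFintype_apply]
      rw [show t - k = (t - (k + 1)) + 1 by omega, Wv, div_eq_inv_mul,
        ENNReal.ofReal_mul (by positivity), ENNReal.ofReal_inv_of_pos hc, ENNReal.ofReal_natCast,
        ENNReal.ofReal_sum_of_nonneg
          (fun U _ => Real.iSup_nonneg fun V => Wv_nonneg Q _ _), Finset.mul_sum]
  refine (key t le_rfl).trans ?_
  rw [PMF.toOuterMeasure_apply]
  refine ENNReal.tsum_le_tsum fun l => ?_
  rw [Nat.sub_self, Wv]
  by_cases hl : Q l
  · rw [Set.indicator_of_mem (by exact hl), if_pos hl]; simp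
  · rw [if_neg hl]; simp

end

lemma contains_mono {V : Type*} {n r s : ℕ} (E : Finset (Finset V)) (h h' : List (Step n r s))
    (hh : h ⊆ h') (hc : ContainsCopy E h) : ContainsCopy E h' := by
  obtain ⟨φ, hφ⟩ := hc
  refine ⟨φ, fun e he => ?_⟩
  obtain ⟨p, hp, hpe⟩ := hφ e he
  exact ⟨p, hh hp, hpe⟩

end SemiRandomHypergraph

namespace SemiRandomHypergraph

/-! ### Building blocks of the copy -/

/-- The history contains an edge with vertex set `F`, without repeated vertices. -/
def HasEdge {n r s : ℕ} (h : List (Step n r s)) (F : Finset (Fin n)) : Prop :=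
  ∃ p ∈ h, p.1.1.val + p.2.1.val = F.val

lemma HasEdge.cons {n r s : ℕ} {h : List (Step n r s)} {F : Finset (Fin n)} (hF : HasEdge h F)
    (p : Step n r s) : HasEdge (p :: h) F := by
  obtain ⟨p', hp', he⟩ := hF
  exact ⟨p', List.mem_cons_of_mem _ hp', he⟩

lemma hasEdge_new {n r s : ℕ} (h : List (Step n r s)) (U : Col n r) (V : Col n (s - r))
    (hd : Disjoint U.1 V.1) (F : Finset (Fin n)) (hF : F = U.1 ∪ V.1) :
    HasEdge ((U, V) :: h) F := by
  refine ⟨(U, V), List.mem_cons_self, ?_⟩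
  rw [hF, ← Finset.disjUnion_eq_union _ _ hd, Finset.disjUnion_val]

/-- Pairwise disjointness of the first `a` members of a family. -/
def PD {n : ℕ} (a : ℕ) (D : ℕ → Finset (Fin n)) : Prop :=
  ∀ i < a, ∀ j < a, i ≠ j → Disjoint (D i) (D j)

/-- Union of the first `a` members of a family. -/
def used {n : ℕ} (a : ℕ) (D : ℕ → Finset (Fin n)) : Finset (Fin n) := (Finset.range a).biUnion D

lemma subset_used {n : ℕ} {a i : ℕ} (D : ℕ → Finset (Fin n)) (h : i < a) : D i ⊆ used a D :=
  Finset.subset_biUnion_of_mem D (Finset.mem_range.2 h)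

lemma card_used {n : ℕ} {a c : ℕ} (D : ℕ → Finset (Fin n)) (h : ∀ i < a, (D i).card ≤ c) :
    (used a D).card ≤ a * c := by
  refine Finset.card_biUnion_le.trans ?_
  refine (Finset.sum_le_card_nsmul _ _ c fun i hi => h i (Finset.mem_range.1 hi)).trans ?_
  simp

lemma PD.ext {n : ℕ} {a : ℕ} {D : ℕ → Finset (Fin n)} (hD : PD a D) (X : Finset (Fin n))
    (hX : Disjoint X (used a D)) :
    ∃ D', (∀ i < a, D' i = D i) ∧ D' a = X ∧ PD (a + 1) D' ∧ used (a + 1) D' = used a D ∪ X := by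
  have e1 : ∀ i < a, Function.update D a X i = D i := fun i hi =>
    Function.update_of_ne (by omega) _ _
  have e2 : Function.update D a X a = X := Function.update_self _ _ _
  refine ⟨Function.update D a X, e1, e2, ?_, ?_⟩
  · intro i hi j hj hij
    rcases Nat.lt_succ_iff_lt_or_eq.1 hi with hi | rfl <;>
    rcases Nat.lt_succ_iff_lt_or_eq.1 hj with hj | rfl
    · rw [e1 i hi, e1 j hj]; exact hD i hi j hj hij
    · rw [e1 i hi, e2]; exact (hX.mono_right (subset_used D hi)).symm
    · rw [e1 j hj, e2]; exact hX.mono_right (subset_used D hj)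
    · exact absurd rfl hij
  · unfold used
    rw [Finset.range_add_one, Finset.biUnion_insert, e2, Finset.union_comm]
    congr 1
    exact Finset.biUnion_congr rfl fun i hi => e1 i (Finset.mem_range.1 hi)

lemma fresh {n : ℕ} (Z : Finset (Fin n)) (c : ℕ) (h : Z.card + c ≤ n) :
    ∃ X : Finset (Fin n), Disjoint X Z ∧ X.card = c := by
  obtain ⟨X, hX, hc⟩ := Finset.exists_subset_card_eq (s := Zᶜ) (n := c)
    (by rw [Finset.card_compl, Fintype.card_fin]; omega)
  exact ⟨X, Finset.disjoint_left.2 fun v hv => Finset.mem_compl.1 (hX hv), hc⟩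

lemma enum {n : ℕ} (hn : 0 < n) (F : Finset (Fin n)) :
    ∃ g : ℕ → Fin n, Set.InjOn g (Finset.range F.card) ∧ (Finset.range F.card).image g = F := by
  have hinj : Set.InjOn (fun i => if h : i < F.card then F.orderEmbOfFin rfl ⟨i, h⟩ else ⟨0, hn⟩)
      (Finset.range F.card) := by
    intro i hi j hj hij
    simp only [Finset.coe_range, Set.mem_Iio] at hi hj
    simp only [hi, hj, dite_true] at hij
    have := (F.orderEmbOfFin rfl).injective hij
    simpa using this
  refine ⟨_, hinj, ?_⟩
  refine Finset.eq_of_subset_of_card_le ?_ ?_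
  · intro v hv
    obtain ⟨i, hi, rfl⟩ := Finset.mem_image.1 hv
    rw [Finset.mem_range] at hi
    simp only [hi, dite_true]
    exact Finset.orderEmbOfFin_mem _ _ _
  · rw [Finset.card_image_of_injOn hinj, Finset.card_range]

lemma enum2 {n : ℕ} (hn : 0 < n) (A P : Finset (Fin n)) (hd : Disjoint A P) :
    ∃ g : ℕ → Fin n, Set.InjOn g (Finset.range (A.card + P.card)) ∧
      (Finset.range A.card).image g = A ∧ (Finset.range (A.card + P.card)).image g = A ∪ P := by
  obtain ⟨a, ha, ha'⟩ := enum hn A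
  obtain ⟨b, hb, hb'⟩ := enum hn P
  let g : ℕ → Fin n := fun i => if i < A.card then a i else b (i - A.card)
  have h1 : (Finset.range A.card).image g = A := by
    refine Eq.trans (Finset.image_congr fun i hi => ?_) ha'
    simp only [Finset.coe_range, Set.mem_Iio] at hi
    simp [g, hi]
  have h2 : (Finset.range (A.card + P.card)).image g = A ∪ P := by
    ext v
    rw [Finset.mem_union, ← h1, ← hb', h1, hb']
    rw [Finset.mem_image]
    constructor
    · rintro ⟨i, hi, rfl⟩
      rw [Finset.mem_range] at hi
      by_cases h : i < A.card
      · left; rw [← h1]; exact Finset.mem_image_of_mem _ (Finset.mem_range.2 h)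
      · right; rw [← hb']
        simp only [g, h, if_false]
        exact Finset.mem_image_of_mem _ (Finset.mem_range.2 (by omega))
    · rintro (h | h)
      · rw [← h1] at h
        obtain ⟨i, hi, rfl⟩ := Finset.mem_image.1 h
        rw [Finset.mem_range] at hi
        exact ⟨i, Finset.mem_range.2 (by omega), rfl⟩
      · rw [← hb'] at h
        obtain ⟨i, hi, rfl⟩ := Finset.mem_image.1 h
        rw [Finset.mem_range] at hi
        refine ⟨A.card + i, Finset.mem_range.2 (by omega), ?_⟩
        simp [g]
  refine ⟨g, ?_, h1, h2⟩
  refine Finset.injOn_of_card_image_eq ?_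
  rw [h2, Finset.card_union_of_disjoint hd, Finset.card_range]

lemma assemble (s ℓ m r n : ℕ) (hℓ : 1 ≤ ℓ) (hm : 3 ≤ m) (hs : 2 * ℓ ≤ s) (hn : 0 < n)
    (h : List (Step n r s)) (D : ℕ → Finset (Fin n)) (hD : PD (2 * m) D)
    (hA : ∀ j < m, (D (2 * j)).card = ℓ) (hP : ∀ j < m, (D (2 * j + 1)).card = s - 2 * ℓ)
    (hE : ∀ j < m, HasEdge h (D (2 * j) ∪ D (2 * j + 1) ∪ D (2 * ((j + 1) % m)))) :
    ContainsCopy (looseCycle s ℓ m) h := by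
  have hg : ∀ j, ∃ g : ℕ → Fin n, j < m → (Set.InjOn g (Finset.range (s - ℓ)) ∧
      (Finset.range ℓ).image g = D (2 * j) ∧
      (Finset.range (s - ℓ)).image g = D (2 * j) ∪ D (2 * j + 1)) := by
    intro j
    by_cases hj : j < m
    · obtain ⟨g, h1, h2, h3⟩ := enum2 hn (D (2 * j)) (D (2 * j + 1))
        (hD _ (by omega) _ (by omega) (by omega))
      rw [hA j hj] at h1 h2 h3
      rw [hP j hj, show ℓ + (s - 2 * ℓ) = s - ℓ by omega] at h1 h3
      exact ⟨g, fun _ => ⟨h1, h2, h3⟩⟩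
    · exact ⟨fun _ => ⟨0, hn⟩, fun h => absurd h hj⟩
  choose g hg using hg
  set d := s - ℓ with hd
  have hd0 : 0 < d := by omega
  have hM : 0 < d * m := Nat.mul_pos hd0 (by omega)
  have : NeZero (d * m) := ⟨hM.ne'⟩
  let φ : ZMod (d * m) → Fin n := fun z => g (z.val / d) (z.val % d)
  have hlt : ∀ z : ZMod (d * m), z.val / d < m := fun z =>
    Nat.div_lt_of_lt_mul (ZMod.val_lt z)
  have hinj : Function.Injective φ := by
    intro z z' hz
    simp only [φ] at hz
    have hi := Nat.mod_lt z.val hd0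
    have hi' := Nat.mod_lt z'.val hd0
    have m1 : g (z.val / d) (z.val % d) ∈ D (2 * (z.val / d)) ∪ D (2 * (z.val / d) + 1) := by
      rw [← (hg _ (hlt z)).2.2]
      exact Finset.mem_image_of_mem _ (Finset.mem_range.2 hi)
    have m2 : g (z'.val / d) (z'.val % d) ∈ D (2 * (z'.val / d)) ∪ D (2 * (z'.val / d) + 1) := by
      rw [← (hg _ (hlt z')).2.2]
      exact Finset.mem_image_of_mem _ (Finset.mem_range.2 hi')
    have hj : z.val / d = z'.val / d := by
      by_contra hne
      have l1 := hlt z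
      have l2 := hlt z'
      have hdis : Disjoint (D (2 * (z.val / d)) ∪ D (2 * (z.val / d) + 1))
          (D (2 * (z'.val / d)) ∪ D (2 * (z'.val / d) + 1)) := by
        simp only [Finset.disjoint_union_left, Finset.disjoint_union_right]
        refine ⟨⟨?_, ?_⟩, ?_, ?_⟩ <;> exact hD _ (by omega) _ (by omega) (by omega)
      rw [hz] at m1
      exact Finset.disjoint_left.1 hdis m1 m2
    rw [hj] at hz
    have hmod : z.val % d = z'.val % d :=
      (hg _ (hlt z')).1 (by simpa using hi) (by simpa using hi') hz
    apply ZMod.val_injective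
    rw [← Nat.div_add_mod z.val d, ← Nat.div_add_mod z'.val d, hj, hmod]
  refine ⟨⟨φ, hinj⟩, ?_⟩
  intro e he
  obtain ⟨j, hj, rfl⟩ := Finset.mem_image.1 he
  rw [Finset.mem_range] at hj
  obtain ⟨p, hp, hpe⟩ := hE j hj
  refine ⟨p, hp, ?_⟩
  rw [hpe]
  rw [← Finset.map_val]
  congr 1
  rw [Finset.map_eq_image, Finset.image_image, ← (hg j hj).2.2,
    ← (hg _ (Nat.mod_lt (j + 1) (by omega))).2.1]
  have hval : ∀ i, φ ((j * d + i : ℕ) : ZMod (d * m)) = g ((j + i / d) % m) (i % d) := by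
    intro i
    simp only [φ]
    rw [ZMod.val_natCast, Nat.mod_mul_right_div_self, Nat.mod_mul_right_mod, mul_comm j d,
      Nat.mul_add_div hd0, Nat.mul_add_mod]
  have hv1 : ∀ i < d, φ ((j * d + i : ℕ) : ZMod (d * m)) = g j i := by
    intro i hi
    rw [hval, Nat.div_eq_of_lt hi, Nat.mod_eq_of_lt hi, add_zero, Nat.mod_eq_of_lt hj]
  have hv2 : ∀ i < d, φ ((j * d + (d + i) : ℕ) : ZMod (d * m)) = g ((j + 1) % m) i := by
    intro i hi
    rw [hval, Nat.add_div_left _ hd0, Nat.div_eq_of_lt hi, Nat.add_mod_left, Nat.mod_eq_of_lt hi]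
  ext v
  simp only [Finset.mem_image, Finset.mem_union, Finset.mem_range, Function.comp,
    Function.Embedding.coeFn_mk]
  constructor
  · rintro ⟨i, hi, rfl⟩
    by_cases hid : i < d
    · left; exact ⟨i, hid, (hv1 i hid).symm⟩
    · right
      refine ⟨i - d, by omega, ?_⟩
      rw [← hv2 _ (by omega)]
      congr 3; omega
  · rintro (⟨i, hi, rfl⟩ | ⟨i, hi, rfl⟩)
    · exact ⟨i, by omega, hv1 i hi⟩
    · exact ⟨d + i, by omega, hv2 i (by omega)⟩

end SemiRandomHypergraph

namespace SemiRandomHypergraph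

/-! ### Part (i): state -/

/-- State in part (i): `k` edges have been built. -/
def StI {n r s : ℕ} (ℓ m k : ℕ) (h : List (Step n r s)) : Prop :=
  ∃ D : ℕ → Finset (Fin n), PD (2 * m) D ∧ (∀ j < m, (D (2 * j)).card = ℓ) ∧
    (∀ j < k, (D (2 * j + 1)).card = s - 2 * ℓ) ∧
    (∀ j, k ≤ j → D (2 * j + 1) = ∅) ∧
    (∀ j < k, HasEdge h (D (2 * j) ∪ D (2 * j + 1) ∪ D (2 * ((j + 1) % m))))

lemma init_sets (n ℓ a : ℕ) (h : a * ℓ ≤ n) :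
    ∃ A : ℕ → Finset (Fin n), PD a A ∧ ∀ i < a, (A i).card = ℓ := by
  induction a with
  | zero => exact ⟨fun _ => ∅, fun i hi => by omega, fun i hi => by omega⟩
  | succ a ih =>
    rw [add_mul, one_mul] at h
    obtain ⟨A, hA, hc⟩ := ih (by omega)
    have hcu := card_used A (c := ℓ) (a := a) fun i hi => (hc i hi).le
    obtain ⟨X, hX, hXc⟩ := fresh (used a A) ℓ (by omega)
    obtain ⟨A', e1, e2, hP, -⟩ := hA.ext X hX
    refine ⟨A', hP, fun i hi => ?_⟩
    rcases Nat.lt_succ_iff_lt_or_eq.1 hi with hi | rfl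
    · rw [e1 i hi, hc i hi]
    · rw [e2, hXc]

lemma StI_init {n r s : ℕ} (ℓ m : ℕ) (h : m * ℓ ≤ n) : StI (n := n) (r := r) (s := s) ℓ m 0 [] := by
  obtain ⟨A, hA, hc⟩ := init_sets n ℓ m h
  refine ⟨fun i => if i % 2 = 0 then A (i / 2) else ∅, ?_, ?_, ?_, ?_, ?_⟩
  · intro i hi j hj hij
    simp only
    split_ifs
    · exact hA _ (by omega) _ (by omega) (by omega)
    all_goals simp
  · intro j hj
    simpa using hc j hj
  · intro j hj; omega
  · intro j _
    simp only
    rw [if_neg (by omega)]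
  · intro j hj; omega

lemma StI_step {n r s : ℕ} (ℓ m k : ℕ) (hm : 3 ≤ m) (hs : 2 * ℓ ≤ s) (hr : r ≤ s - 2 * ℓ)
    (hk : k < m) (hn : 2 * m * s + s ≤ n)
    (h : List (Step n r s)) (hst : StI ℓ m k h) :
    ∃ Z : Finset (Fin n), Z.card ≤ 2 * m * s ∧ ∀ U : Col n r, Disjoint U.1 Z →
      ∃ V, StI ℓ m (k + 1) ((U, V) :: h) := by
  obtain ⟨D, hD, hA, hP, hP0, hE⟩ := hst
  have hcu : (used (2 * m) D).card ≤ 2 * m * s := by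
    refine card_used D fun i hi => ?_
    rcases Nat.even_or_odd' i with ⟨j, rfl | rfl⟩
    · rw [hA j (by omega)]; omega
    · by_cases hj : j < k
      · rw [hP j hj]; omega
      · rw [hP0 j (by omega)]; simp
  refine ⟨used (2 * m) D, hcu, fun U hU => ?_⟩
  have hc1 := Finset.card_union_le (used (2 * m) D) U.1
  rw [U.2] at hc1
  obtain ⟨X, hX, hXc⟩ := fresh (used (2 * m) D ∪ U.1) (s - 2 * ℓ - r) (by omega)
  rw [Finset.disjoint_union_right] at hX
  obtain ⟨hX1, hX2⟩ := hX
  set k' := (k + 1) % m with hk'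
  have hk'm : k' < m := Nat.mod_lt _ (by omega)
  have hkk : k ≠ k' := by
    intro he
    by_cases h1 : k + 1 < m
    · rw [hk', Nat.mod_eq_of_lt h1] at he; omega
    · rw [hk', show k + 1 = m by omega, Nat.mod_self] at he; omega
  have s1 := subset_used D (show 2 * k < 2 * m by omega)
  have s2 := subset_used D (show 2 * k' < 2 * m by omega)
  have d1 : Disjoint (D (2 * k)) (D (2 * k')) := hD _ (by omega) _ (by omega) (by omega)
  have hVc : (D (2 * k) ∪ D (2 * k') ∪ X).card = s - r := by
    rw [Finset.card_union_of_disjoint, Finset.card_union_of_disjoint d1, hA k hk, hA k' hk'm, hXc]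
    · omega
    · rw [Finset.disjoint_union_left]
      exact ⟨(hX1.mono_right s1).symm, (hX1.mono_right s2).symm⟩
  refine ⟨⟨_, hVc⟩, Function.update D (2 * k + 1) (U.1 ∪ X), ?_, ?_, ?_, ?_, ?_⟩
  · have hnew : Disjoint (U.1 ∪ X) (used (2 * m) D) := Finset.disjoint_union_left.2 ⟨hU, hX1⟩
    intro i hi j hj hij
    by_cases h1 : i = 2 * k + 1
    · rw [h1, Function.update_self, Function.update_of_ne (by omega)]
      exact hnew.mono_right (subset_used D hj)
    · rw [Function.update_of_ne h1]
      by_cases h2 : j = 2 * k + 1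
      · rw [h2, Function.update_self]
        exact (hnew.mono_right (subset_used D hi)).symm
      · rw [Function.update_of_ne h2]
        exact hD i hi j hj hij
  · intro j hj
    rw [Function.update_of_ne (by omega), hA j hj]
  · intro j hj
    by_cases h1 : j = k
    · rw [h1, Function.update_self, Finset.card_union_of_disjoint hX2.symm, U.2, hXc]; omega
    · rw [Function.update_of_ne (by omega), hP j (by omega)]
  · intro j hj
    rw [Function.update_of_ne (by omega), hP0 j (by omega)]
  · intro j hj
    by_cases h1 : j = k
    · rw [h1, Function.update_self, Function.update_of_ne (by omega), Function.update_of_ne (by omega)]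
      refine hasEdge_new h U ⟨_, hVc⟩ ?_ _ ?_
      · simp only [Finset.disjoint_union_right]
        exact ⟨⟨hU.mono_right s1, hU.mono_right s2⟩, hX2.symm⟩
      · ext v; simp only [Finset.mem_union]; tauto
    · rw [Function.update_of_ne (by omega), Function.update_of_ne (by omega),
        Function.update_of_ne (by omega)]
      exact (hE j (by omega)).cons _

lemma StI_final {n r s : ℕ} (ℓ m : ℕ) (hℓ : 1 ≤ ℓ) (hm : 3 ≤ m) (hs : 2 * ℓ ≤ s) (hn : 0 < n)
    (h : List (Step n r s)) (hst : StI ℓ m m h) : ContainsCopy (looseCycle s ℓ m) h := by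
  obtain ⟨D, hD, hA, hP, -, hE⟩ := hst
  exact assemble s ℓ m r n hℓ hm hs hn h D hD hA hP hE

/-! ### Part (iii): states -/

/-- Data of a loose path with `k` edges. -/
def PathD {n r s : ℕ} (ℓ k : ℕ) (h : List (Step n r s)) (D : ℕ → Finset (Fin n)) : Prop :=
  PD (2 * k + 1) D ∧ (∀ j ≤ k, (D (2 * j)).card = ℓ) ∧
    (∀ j < k, (D (2 * j + 1)).card = s - 2 * ℓ) ∧
    (∀ j < k, HasEdge h (D (2 * j) ∪ D (2 * j + 1) ∪ D (2 * j + 2)))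

lemma PathD.cons {n r s : ℕ} {ℓ k : ℕ} {h : List (Step n r s)} {D : ℕ → Finset (Fin n)}
    (hD : PathD ℓ k h D) (p : Step n r s) : PathD ℓ k (p :: h) D :=
  ⟨hD.1, hD.2.1, hD.2.2.1, fun j hj => (hD.2.2.2 j hj).cons p⟩

lemma PathD.card_used {n r s : ℕ} {ℓ k : ℕ} (hs : 2 * ℓ ≤ s) {h : List (Step n r s)}
    {D : ℕ → Finset (Fin n)} (hD : PathD ℓ k h D) : (used (2 * k + 1) D).card ≤ (2 * k + 1) * s := by
  refine SemiRandomHypergraph.card_used D fun i hi => ?_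
  rcases Nat.even_or_odd' i with ⟨j, rfl | rfl⟩
  · rw [hD.2.1 j (by omega)]; omega
  · rw [hD.2.2.1 j (by omega)]; omega

/-- Path state. -/
def PathSt {n r s : ℕ} (ℓ k : ℕ) (h : List (Step n r s)) : Prop := ∃ D, PathD ℓ k h D

lemma PathSt_init {n r s : ℕ} (ℓ : ℕ) (h : ℓ ≤ n) : PathSt (n := n) (r := r) (s := s) ℓ 0 [] := by
  obtain ⟨X, -, hX⟩ := fresh (∅ : Finset (Fin n)) ℓ (by simpa using h)
  refine ⟨fun _ => X, fun i hi j hj hij => by omega, fun j _ => hX, fun j hj => by omega,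
    fun j hj => by omega⟩

lemma PathSt_step {n r s : ℕ} (ℓ k : ℕ) (hℓ : 2 ≤ ℓ) (hs : 2 * ℓ ≤ s) (hr : r = s - 2 * ℓ + 2)
    (hn : (2 * k + 1) * s + 2 * s ≤ n)
    (h : List (Step n r s)) (hst : PathSt ℓ k h) :
    ∃ Z : Finset (Fin n), Z.card ≤ (2 * k + 1) * s ∧ ∀ U : Col n r, Disjoint U.1 Z →
      ∃ V, PathSt ℓ (k + 1) ((U, V) :: h) := by
  obtain ⟨D, hPD⟩ := hst
  have hcu := hPD.card_used hs
  obtain ⟨hD, hA, hP, hE⟩ := hPD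
  refine ⟨used (2 * k + 1) D, hcu, fun U hU => ?_⟩
  have hc1 := Finset.card_union_le (used (2 * k + 1) D) U.1
  rw [U.2] at hc1
  obtain ⟨X, hX, hXc⟩ := fresh (used (2 * k + 1) D ∪ U.1) (ℓ - 2) (by omega)
  rw [Finset.disjoint_union_right] at hX
  obtain ⟨hX1, hX2⟩ := hX
  have s1 := subset_used D (show 2 * k < 2 * k + 1 by omega)
  have hVc : (D (2 * k) ∪ X).card = s - r := by
    rw [Finset.card_union_of_disjoint (hX1.mono_right s1).symm, hA k le_rfl, hXc]
    omega
  have hUX : (U.1 ∪ X).card = s - ℓ := by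
    rw [Finset.card_union_of_disjoint hX2.symm, U.2, hXc]; omega
  obtain ⟨P, hPs, hPc⟩ := Finset.exists_subset_card_eq (s := U.1 ∪ X) (n := s - 2 * ℓ) (by omega)
  have hnew : Disjoint (U.1 ∪ X) (used (2 * k + 1) D) := Finset.disjoint_union_left.2 ⟨hU, hX1⟩
  obtain ⟨D1, e1, e1', hD1, hu1⟩ := hD.ext P (hnew.mono_left hPs)
  obtain ⟨D2, e2, e2', hD2, -⟩ := hD1.ext ((U.1 ∪ X) \ P) (by
    rw [hu1, Finset.disjoint_union_right]
    exact ⟨hnew.mono_left Finset.sdiff_subset, Finset.sdiff_disjoint⟩)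
  have hold : ∀ i < 2 * k + 1, D2 i = D i := fun i hi => by rw [e2 i (by omega), e1 i hi]
  have hP2 : D2 (2 * k + 1) = P := by rw [e2 _ (by omega), e1']
  have hA2 : D2 (2 * k + 2) = (U.1 ∪ X) \ P := e2'
  refine ⟨⟨_, hVc⟩, D2, hD2, ?_, ?_, ?_⟩
  · intro j hj
    rcases Nat.lt_succ_iff_lt_or_eq.1 (Nat.lt_succ_of_le hj) with hj | rfl
    · rw [hold _ (by omega), hA j (by omega)]
    · rw [show 2 * (k + 1) = 2 * k + 2 by ring, hA2, Finset.card_sdiff_of_subset hPs, hUX, hPc]; omega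
  · intro j hj
    rcases Nat.lt_succ_iff_lt_or_eq.1 hj with hj | rfl
    · rw [hold _ (by omega), hP j (by omega)]
    · rw [hP2, hPc]
  · intro j hj
    rcases Nat.lt_succ_iff_lt_or_eq.1 hj with hj | rfl
    · rw [hold _ (by omega), hold _ (by omega), hold _ (by omega)]
      exact (hE j hj).cons _
    · rw [hP2, hA2, hold _ (by omega), Finset.union_assoc, Finset.union_sdiff_of_subset hPs]
      refine hasEdge_new h U ⟨_, hVc⟩ ?_ _ ?_
      · exact Finset.disjoint_union_right.2 ⟨hU.mono_right s1, hX2.symm⟩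
      · ext v; simp only [Finset.mem_union]; tauto

/-- Every vertex of `X` lies in an `r`-set inside `X` that forms an edge together with `V`. -/
def Fam {n r s : ℕ} (h : List (Step n r s)) (V X : Finset (Fin n)) : Prop :=
  ∀ x ∈ X, ∃ u : Finset (Fin n), x ∈ u ∧ u ⊆ X ∧ u.card = r ∧ HasEdge h (V ∪ u)

lemma Fam.cons {n r s : ℕ} {h : List (Step n r s)} {V X : Finset (Fin n)} (hF : Fam h V X)
    (p : Step n r s) : Fam (p :: h) V X := by
  intro x hx
  obtain ⟨u, h1, h2, h3, h4⟩ := hF x hx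
  exact ⟨u, h1, h2, h3, h4.cons p⟩

lemma Fam.add {n r s : ℕ} {h : List (Step n r s)} {X : Finset (Fin n)} (V : Col n (s - r))
    (hF : Fam h V.1 X) (U : Col n r) (hd : Disjoint U.1 V.1) :
    Fam ((U, V) :: h) V.1 (X ∪ U.1) := by
  intro x hx
  rcases Finset.mem_union.1 hx with hx | hx
  · obtain ⟨u, h1, h2, h3, h4⟩ := hF x hx
    exact ⟨u, h1, h2.trans Finset.subset_union_left, h3, h4.cons _⟩
  · exact ⟨U.1, hx, Finset.subset_union_right, U.2, hasEdge_new h U V hd _ (Finset.union_comm _ _)⟩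

/-- State while growing the two families. -/
def FamSt {n r s : ℕ} (ℓ k i₁ i₂ : ℕ) (h : List (Step n r s)) : Prop :=
  ∃ (D : ℕ → Finset (Fin n)) (B₁ B₂ X₁ X₂ : Finset (Fin n)), PathD ℓ k h D ∧
    B₁.card = ℓ - 2 ∧ B₂.card = ℓ - 2 ∧ Disjoint B₁ (used (2 * k + 1) D) ∧
    Disjoint B₂ (used (2 * k + 1) D ∪ B₁) ∧
    Disjoint X₁ (used (2 * k + 1) D ∪ B₁ ∪ B₂) ∧
    Disjoint X₂ (used (2 * k + 1) D ∪ B₁ ∪ B₂ ∪ X₁) ∧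
    X₁.card = r * i₁ ∧ X₂.card = r * i₂ ∧
    Fam h (D 0 ∪ B₁) X₁ ∧ Fam h (D (2 * k) ∪ B₂) X₂

lemma FamSt_init {n r s : ℕ} (ℓ k : ℕ) (hs : 2 * ℓ ≤ s)
    (hn : (2 * k + 1) * s + 2 * s ≤ n)
    (h : List (Step n r s)) (hst : PathSt ℓ k h) : FamSt ℓ k 0 0 h := by
  obtain ⟨D, hPD⟩ := hst
  have hcu := hPD.card_used hs
  obtain ⟨B₁, hB₁, hc₁⟩ := fresh (used (2 * k + 1) D) (ℓ - 2) (by omega)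
  have h1 := Finset.card_union_le (used (2 * k + 1) D) B₁
  obtain ⟨B₂, hB₂, hc₂⟩ := fresh (used (2 * k + 1) D ∪ B₁) (ℓ - 2) (by omega)
  exact ⟨D, B₁, B₂, ∅, ∅, hPD, hc₁, hc₂, hB₁, hB₂, by simp, by simp, by simp, by simp,
    by simp [Fam], by simp [Fam]⟩

/-- All used vertices. -/
def allZ {n : ℕ} (k : ℕ) (D : ℕ → Finset (Fin n)) (B₁ B₂ X₁ X₂ : Finset (Fin n)) :
    Finset (Fin n) := used (2 * k + 1) D ∪ B₁ ∪ B₂ ∪ X₁ ∪ X₂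

lemma card_allZ {n r s : ℕ} {ℓ k i₁ i₂ : ℕ} (hs : 2 * ℓ ≤ s) {h : List (Step n r s)}
    {D : ℕ → Finset (Fin n)} {B₁ B₂ X₁ X₂ : Finset (Fin n)} (hPD : PathD ℓ k h D)
    (hc₁ : B₁.card = ℓ - 2) (hc₂ : B₂.card = ℓ - 2) (hX₁ : X₁.card = r * i₁)
    (hX₂ : X₂.card = r * i₂) :
    (allZ k D B₁ B₂ X₁ X₂).card ≤ (2 * k + 2) * s + r * i₁ + r * i₂ := by
  have hcu := hPD.card_used hs
  unfold allZ
  have h1 := Finset.card_union_le (used (2 * k + 1) D) B₁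
  have h2 := Finset.card_union_le (used (2 * k + 1) D ∪ B₁) B₂
  have h3 := Finset.card_union_le (used (2 * k + 1) D ∪ B₁ ∪ B₂) X₁
  have h4 := Finset.card_union_le (used (2 * k + 1) D ∪ B₁ ∪ B₂ ∪ X₁) X₂
  have h5 : (2 * k + 2) * s = (2 * k + 1) * s + s := by ring
  omega

lemma FamSt_step₁ {n r s : ℕ} (ℓ k i₁ i₂ : ℕ) (hℓ : 2 ≤ ℓ) (hs : 2 * ℓ ≤ s)
    (hr : r = s - 2 * ℓ + 2) (h : List (Step n r s)) (hst : FamSt ℓ k i₁ i₂ h) :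
    ∃ Z : Finset (Fin n), Z.card ≤ (2 * k + 2) * s + r * i₁ + r * i₂ ∧
      ∀ U : Col n r, Disjoint U.1 Z → ∃ V, FamSt ℓ k (i₁ + 1) i₂ ((U, V) :: h) := by
  obtain ⟨D, B₁, B₂, X₁, X₂, hPD, hc₁, hc₂, hB₁, hB₂, hX₁, hX₂, hXc₁, hXc₂, hF₁, hF₂⟩ := hst
  refine ⟨allZ k D B₁ B₂ X₁ X₂, card_allZ hs hPD hc₁ hc₂ hXc₁ hXc₂, fun U hU => ?_⟩
  unfold allZ at hU
  simp only [Finset.disjoint_union_right] at hU hX₁ hX₂ hB₂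
  obtain ⟨⟨⟨⟨u1, u2⟩, u3⟩, u4⟩, u5⟩ := hU
  have s0 := subset_used D (show 0 < 2 * k + 1 by omega)
  have hVc : (D 0 ∪ B₁).card = s - r := by
    rw [Finset.card_union_of_disjoint (hB₁.mono_right s0).symm, hc₁]
    have := hPD.2.1 0 (by omega)
    rw [mul_zero] at this
    omega
  refine ⟨⟨_, hVc⟩, D, B₁, B₂, X₁ ∪ U.1, X₂, hPD.cons _, hc₁, hc₂, hB₁, ?_, ?_, ?_, ?_, hXc₂,
    Fam.add ⟨_, hVc⟩ hF₁ U ?_, hF₂.cons _⟩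
  · simp only [Finset.disjoint_union_right]; exact hB₂
  · simp only [Finset.disjoint_union_right, Finset.disjoint_union_left]
    tauto
  · simp only [Finset.disjoint_union_right]
    exact ⟨hX₂.1, hX₂.2, u5.symm⟩
  · rw [Finset.card_union_of_disjoint u4.symm, hXc₁, U.2]; ring
  · simp only [Finset.disjoint_union_right]
    exact ⟨u1.mono_right s0, u2⟩

lemma FamSt_step₂ {n r s : ℕ} (ℓ k i₁ i₂ : ℕ) (hℓ : 2 ≤ ℓ) (hs : 2 * ℓ ≤ s)
    (hr : r = s - 2 * ℓ + 2) (h : List (Step n r s)) (hst : FamSt ℓ k i₁ i₂ h) :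
    ∃ Z : Finset (Fin n), Z.card ≤ (2 * k + 2) * s + r * i₁ + r * i₂ ∧
      ∀ U : Col n r, Disjoint U.1 Z → ∃ V, FamSt ℓ k i₁ (i₂ + 1) ((U, V) :: h) := by
  obtain ⟨D, B₁, B₂, X₁, X₂, hPD, hc₁, hc₂, hB₁, hB₂, hX₁, hX₂, hXc₁, hXc₂, hF₁, hF₂⟩ := hst
  refine ⟨allZ k D B₁ B₂ X₁ X₂, card_allZ hs hPD hc₁ hc₂ hXc₁ hXc₂, fun U hU => ?_⟩
  unfold allZ at hU
  simp only [Finset.disjoint_union_right] at hU hX₁ hX₂ hB₂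
  obtain ⟨⟨⟨⟨u1, u2⟩, u3⟩, u4⟩, u5⟩ := hU
  have s0 := subset_used D (show 2 * k < 2 * k + 1 by omega)
  have hVc : (D (2 * k) ∪ B₂).card = s - r := by
    rw [Finset.card_union_of_disjoint (hB₂.1.mono_right s0).symm, hc₂]
    have := hPD.2.1 k (by omega)
    omega
  refine ⟨⟨_, hVc⟩, D, B₁, B₂, X₁, X₂ ∪ U.1, hPD.cons _, hc₁, hc₂, hB₁, ?_, ?_, ?_, hXc₁, ?_,
    hF₁.cons _, Fam.add ⟨_, hVc⟩ hF₂ U ?_⟩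
  · simp only [Finset.disjoint_union_right]; exact hB₂
  · simp only [Finset.disjoint_union_right]; exact hX₁
  · simp only [Finset.disjoint_union_right, Finset.disjoint_union_left]
    tauto
  · rw [Finset.card_union_of_disjoint u5.symm, hXc₂, U.2]; ring
  · simp only [Finset.disjoint_union_right]
    exact ⟨u1.mono_right s0, u3⟩

lemma aux_set {α : Type*} [DecidableEq α] (B₁ B₂ R : Finset α) (x₁ y₁ x₂ y₂ : α) :
    B₂ ∪ {x₂, y₂} ∪ R ∪ (B₁ ∪ {x₁, y₁}) = insert x₁ (insert x₂ R) ∪ (B₁ ∪ B₂ ∪ {y₁, y₂}) := by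
  grind

set_option maxHeartbeats 1000000 in
lemma FamSt_final {n r s : ℕ} (ℓ k : ℕ) (hℓ : 2 ≤ ℓ) (hs : 2 * ℓ ≤ s)
    (hr : r = s - 2 * ℓ + 2) (hn : 0 < n) (h : List (Step n r s))
    (D : ℕ → Finset (Fin n)) (B₁ B₂ X₁ X₂ : Finset (Fin n)) (hPD : PathD ℓ k h D)
    (hc₁ : B₁.card = ℓ - 2) (hc₂ : B₂.card = ℓ - 2) (hB₁ : Disjoint B₁ (used (2 * k + 1) D))
    (hB₂ : Disjoint B₂ (used (2 * k + 1) D ∪ B₁))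
    (hX₁ : Disjoint X₁ (used (2 * k + 1) D ∪ B₁ ∪ B₂))
    (hX₂ : Disjoint X₂ (used (2 * k + 1) D ∪ B₁ ∪ B₂ ∪ X₁))
    (hF₁ : Fam h (D 0 ∪ B₁) X₁) (hF₂ : Fam h (D (2 * k) ∪ B₂) X₂)
    (U : Col n r) (x₁ x₂ : Fin n) (hx₁ : x₁ ∈ X₁) (hx₂ : x₂ ∈ X₂) (R : Finset (Fin n))
    (hR : Disjoint R (allZ k D B₁ B₂ X₁ X₂)) (hU : U.1 = insert x₁ (insert x₂ R)) :
    ∃ V, ContainsCopy (looseCycle s ℓ (k + 3)) ((U, V) :: h) := by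
  unfold allZ at hR
  obtain ⟨u₁, hxu₁, hu₁, huc₁, he₁⟩ := hF₁ x₁ hx₁
  obtain ⟨u₂, hxu₂, hu₂, huc₂, he₂⟩ := hF₂ x₂ hx₂
  obtain ⟨y₁, hy₁, hyx₁⟩ := Finset.exists_mem_ne (s := u₁) (by omega) x₁
  obtain ⟨y₂, hy₂, hyx₂⟩ := Finset.exists_mem_ne (s := u₂) (by omega) x₂
  have hp₁ : ({x₁, y₁} : Finset (Fin n)) ⊆ u₁ := by
    intro v; simp only [Finset.mem_insert, Finset.mem_singleton]; rintro (rfl | rfl) <;> assumption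
  have hp₂ : ({x₂, y₂} : Finset (Fin n)) ⊆ u₂ := by
    intro v; simp only [Finset.mem_insert, Finset.mem_singleton]; rintro (rfl | rfl) <;> assumption
  have hpc₁ : ({x₁, y₁} : Finset (Fin n)).card = 2 := Finset.card_pair hyx₁.symm
  have hpc₂ : ({x₂, y₂} : Finset (Fin n)).card = 2 := Finset.card_pair hyx₂.symm
  simp only [Finset.disjoint_union_right] at hR hX₁ hX₂ hB₂
  obtain ⟨⟨⟨⟨r1, r2⟩, r3⟩, r4⟩, r5⟩ := hR
  obtain ⟨⟨a1, a2⟩, a3⟩ := hX₁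
  obtain ⟨⟨⟨b1, b2⟩, b3⟩, b4⟩ := hX₂
  obtain ⟨c1, c2⟩ := hB₂
  have hp₁X := hp₁.trans hu₁
  have hp₂X := hp₂.trans hu₂
  obtain ⟨hD, hA, hP, hE⟩ := hPD
  -- five extensions
  obtain ⟨D1, e1, f1, hD1, hU1⟩ := hD.ext (u₂ \ {x₂, y₂})
    (b1.mono_left (Finset.sdiff_subset.trans hu₂))
  obtain ⟨D2, e2, f2, hD2, hU2⟩ := hD1.ext (B₂ ∪ {x₂, y₂}) (by
    rw [hU1]
    simp only [Finset.disjoint_union_right, Finset.disjoint_union_left]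
    exact ⟨⟨c1, b1.mono_left hp₂X⟩,
      (b3.mono_left (Finset.sdiff_subset.trans hu₂)).symm, Finset.disjoint_sdiff⟩)
  obtain ⟨D3, e3, f3, hD3, hU3⟩ := hD2.ext R (by
    rw [hU2, hU1]
    simp only [Finset.disjoint_union_right]
    exact ⟨⟨r1, r5.mono_right (Finset.sdiff_subset.trans hu₂)⟩, r3, r5.mono_right hp₂X⟩)
  obtain ⟨D4, e4, f4, hD4, hU4⟩ := hD3.ext (B₁ ∪ {x₁, y₁}) (by
    rw [hU3, hU2, hU1]
    simp only [Finset.disjoint_union_right, Finset.disjoint_union_left]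
    exact ⟨⟨⟨⟨hB₁, a1.mono_left hp₁X⟩,
      (b2.mono_left (Finset.sdiff_subset.trans hu₂)).symm,
        (b4.mono (Finset.sdiff_subset.trans hu₂) hp₁X).symm⟩,
      ⟨c2.symm, a3.mono_left hp₁X⟩, (b2.mono_left hp₂X).symm, (b4.mono hp₂X hp₁X).symm⟩,
      r2.symm, (r4.mono_right hp₁X).symm⟩)
  obtain ⟨D5, e5, f5, hD5, hU5⟩ := hD4.ext (u₁ \ {x₁, y₁}) (by
    rw [hU4, hU3, hU2, hU1]
    have hq : u₁ \ {x₁, y₁} ⊆ X₁ := Finset.sdiff_subset.trans hu₁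
    have hq₂ : u₂ \ {x₂, y₂} ⊆ X₂ := Finset.sdiff_subset.trans hu₂
    simp only [Finset.disjoint_union_right]
    exact ⟨⟨⟨⟨a1.mono_left hq, (b4.mono hq₂ hq).symm⟩, a3.mono_left hq, (b4.mono hp₂X hq).symm⟩,
      (r4.mono_right hq).symm⟩, a2.mono_left hq, Finset.sdiff_disjoint⟩)
  have g0 : ∀ i < 2 * k + 1, D5 i = D i := fun i hi => by
    rw [e5 i (by omega), e4 i (by omega), e3 i (by omega), e2 i (by omega), e1 i hi]
  have g1 : D5 (2 * k + 1) = u₂ \ {x₂, y₂} := by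
    rw [e5 _ (by omega), e4 _ (by omega), e3 _ (by omega), e2 _ (by omega), f1]
  have g2 : D5 (2 * k + 2) = B₂ ∪ {x₂, y₂} := by
    rw [e5 _ (by omega), e4 _ (by omega), e3 _ (by omega)]; exact f2
  have g3 : D5 (2 * k + 3) = R := by
    rw [e5 _ (by omega), e4 _ (by omega)]; exact f3
  have g4 : D5 (2 * k + 4) = B₁ ∪ {x₁, y₁} := by
    rw [e5 _ (by omega)]; exact f4
  have g5 : D5 (2 * k + 5) = u₁ \ {x₁, y₁} := f5
  have hx12 : x₁ ≠ x₂ := by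
    rintro rfl; exact Finset.disjoint_left.1 b4 hx₂ hx₁
  have hy12 : y₁ ≠ y₂ := by
    rintro rfl; exact Finset.disjoint_left.1 b4 (hu₂ hy₂) (hu₁ hy₁)
  have hRc : R.card = s - 2 * ℓ := by
    have h1 := U.2
    rw [hU, Finset.card_insert_of_notMem, Finset.card_insert_of_notMem] at h1
    · omega
    · exact fun hh => Finset.disjoint_left.1 r5 hh hx₂
    · simp only [Finset.mem_insert, not_or]
      exact ⟨hx12, fun hh => Finset.disjoint_left.1 r4 hh hx₁⟩
  have hyX₁ := hu₁ hy₁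
  have hyX₂ := hu₂ hy₂
  have hVc : (B₁ ∪ B₂ ∪ {y₁, y₂}).card = s - r := by
    rw [Finset.card_union_of_disjoint, Finset.card_union_of_disjoint c2.symm, hc₁, hc₂,
      Finset.card_pair hy12]
    · omega
    · simp only [Finset.disjoint_insert_right, Finset.disjoint_singleton_right, Finset.mem_union, not_or]
      exact ⟨⟨Finset.disjoint_left.1 a2 hyX₁, Finset.disjoint_left.1 a3 hyX₁⟩,
        Finset.disjoint_left.1 b2 hyX₂, Finset.disjoint_left.1 b3 hyX₂⟩
  refine ⟨⟨_, hVc⟩, assemble s ℓ (k + 3) r n (by omega) (by omega) hs hn _ D5 hD5 ?_ ?_ ?_⟩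
  · intro j hj
    rcases (by omega : j ≤ k ∨ j = k + 1 ∨ j = k + 2) with hj | rfl | rfl
    · rw [g0 _ (by omega), hA j hj]
    · rw [show 2 * (k + 1) = 2 * k + 2 by ring, g2, Finset.card_union_of_disjoint
        (b3.mono_left hp₂X).symm, hc₂, hpc₂]; omega
    · rw [show 2 * (k + 2) = 2 * k + 4 by ring, g4, Finset.card_union_of_disjoint
        (a2.mono_left hp₁X).symm, hc₁, hpc₁]; omega
  · intro j hj
    rcases (by omega : j < k ∨ j = k ∨ j = k + 1 ∨ j = k + 2) with hj | rfl | rfl | rfl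
    · rw [g0 _ (by omega), hP j hj]
    · rw [g1, Finset.card_sdiff_of_subset hp₂, hpc₂, huc₂]; omega
    · rw [show 2 * (k + 1) + 1 = 2 * k + 3 by ring, g3, hRc]
    · rw [show 2 * (k + 2) + 1 = 2 * k + 5 by ring, g5, Finset.card_sdiff_of_subset hp₁, hpc₁, huc₁]
      omega
  · intro j hj
    rcases (by omega : j < k ∨ j = k ∨ j = k + 1 ∨ j = k + 2) with hj | rfl | rfl | rfl
    · rw [Nat.mod_eq_of_lt (by omega), show 2 * (j + 1) = 2 * j + 2 by ring, g0 _ (by omega),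
        g0 _ (by omega), g0 _ (by omega)]
      exact (hE j hj).cons _
    · rw [Nat.mod_eq_of_lt (by omega), show 2 * (j + 1) = 2 * j + 2 by ring, g0 _ (by omega), g1, g2]
      have : D (2 * j) ∪ u₂ \ {x₂, y₂} ∪ (B₂ ∪ {x₂, y₂}) = D (2 * j) ∪ B₂ ∪ u₂ := by
        conv_rhs => rw [← Finset.union_sdiff_of_subset hp₂]
        ext v; simp only [Finset.mem_union]; tauto
      rw [this]
      exact he₂.cons _
    · rw [Nat.mod_eq_of_lt (by omega), show 2 * (k + 1) = 2 * k + 2 by ring,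
        show 2 * (k + 1 + 1) = 2 * k + 4 by ring, g2, g3, g4]
      refine hasEdge_new h U ⟨_, hVc⟩ ?_ _ ?_
      · rw [hU]
        have t1 := Finset.disjoint_left.1 a2 hx₁
        have t2 := Finset.disjoint_left.1 a3 hx₁
        have t3 := Finset.disjoint_left.1 b2 hx₂
        have t4 := Finset.disjoint_left.1 b3 hx₂
        have t5 : x₁ ≠ y₂ := by rintro rfl; exact Finset.disjoint_left.1 b4 hyX₂ hx₁
        have t6 : x₂ ≠ y₁ := by rintro rfl; exact Finset.disjoint_left.1 b4 hx₂ hyX₁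
        have t7 : y₁ ∉ R := fun hh => Finset.disjoint_left.1 r4 hh hyX₁
        have t8 : y₂ ∉ R := fun hh => Finset.disjoint_left.1 r5 hh hyX₂
        simp only [Finset.disjoint_insert_left, Finset.mem_insert, not_or, Finset.disjoint_union_right, Finset.disjoint_insert_right,
          Finset.disjoint_singleton_right]
        exact ⟨⟨⟨t1, t3, r2⟩, t2, t4, r3⟩, ⟨hyx₁, t6.symm, t7⟩, t5.symm, hyx₂, t8⟩
      · rw [hU]
        exact aux_set _ _ _ _ _ _ _
    · rw [show (k + 2 + 1) % (k + 3) = 0 from Nat.mod_self _, show 2 * (k + 2) = 2 * k + 4 by ring,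
        g4, show 2 * k + 4 + 1 = 2 * k + 5 by ring, g5, mul_zero, g0 _ (by omega)]
      have : B₁ ∪ {x₁, y₁} ∪ u₁ \ {x₁, y₁} ∪ D 0 = D 0 ∪ B₁ ∪ u₁ := by
        conv_rhs => rw [← Finset.union_sdiff_of_subset hp₁]
        ext v; simp only [Finset.mem_union]; tauto
      rw [this]
      exact he₁.cons _

end SemiRandomHypergraph

namespace SemiRandomHypergraph

/-! ### Exponents -/

lemma elog_coe (t : ℕ) : elog (t : ℕ∞) = ((Real.log t : ℝ) : EReal) := rfl

lemma elog_top : elog ⊤ = ⊤ := rfl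

lemma elog_nonneg (a : ℕ∞) : 0 ≤ elog a := by
  rcases eq_or_ne a ⊤ with rfl | ha
  · rw [elog_top]; exact le_top
  · lift a to ℕ using ha
    rw [elog_coe]
    exact_mod_cast Real.log_natCast_nonneg a

lemma elog_mono {a b : ℕ∞} (h : a ≤ b) : elog a ≤ elog b := by
  rcases eq_or_ne b ⊤ with rfl | hb
  · rw [elog_top]; exact le_top
  · have ha : a ≠ ⊤ := fun e => hb (top_le_iff.1 (e ▸ h))
    lift b to ℕ using hb
    lift a to ℕ using ha
    have hut : a ≤ b := by exact_mod_cast h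
    rw [elog_coe, elog_coe, EReal.coe_le_coe_iff]
    rcases Nat.eq_zero_or_pos a with rfl | hu
    · simpa using Real.log_natCast_nonneg b
    · exact Real.log_le_log (by exact_mod_cast hu) (by exact_mod_cast hut)

lemma tendsto_exponent (c α : ℝ) :
    Tendsto (fun n : ℕ => (((c + α * Real.log n) * (Real.log n)⁻¹ : ℝ) : EReal)) atTop
      (nhds (α : EReal)) := by
  rw [EReal.tendsto_coe]
  have hl : Tendsto (fun n : ℕ => Real.log n) atTop atTop :=
    Real.tendsto_log_atTop.comp tendsto_natCast_atTop_atTop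
  have h1 : Tendsto (fun n : ℕ => c * (Real.log n)⁻¹ + α) atTop (nhds (c * 0 + α)) :=
    (hl.inv_tendsto_atTop.const_mul c).add_const α
  rw [mul_zero, zero_add] at h1
  refine h1.congr' ?_
  filter_upwards [hl.eventually_gt_atTop 0] with n hn
  field_simp

lemma tauExp_le {V : Type*} (r s : ℕ) (E : Finset (Finset V)) (α : ℝ) (hα : 0 ≤ α)
    (h : ∀ q : ℝ, 0 < q → q < 1 → ∃ C : ℝ, 1 ≤ C ∧ ∀ᶠ n : ℕ in atTop, ∃ (S : Strategy n r s) (t : ℕ),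
      (t : ℝ) ≤ C * (n : ℝ) ^ α ∧ ENNReal.ofReal q ≤ probContains n r s E S t) :
    tauExp r s E ≤ (α : EReal) := by
  unfold tauExp
  refine iSup₂_le fun q hq => ?_
  have hqt : q ≠ ⊤ := (hq.2.trans ENNReal.one_lt_top).ne
  have hq0 : 0 < q.toReal := ENNReal.toReal_pos hq.1.ne' hqt
  have hq1 : q.toReal < 1 := by
    rw [← ENNReal.toReal_one]
    exact (ENNReal.toReal_lt_toReal hqt ENNReal.one_ne_top).2 hq.2
  obtain ⟨C, hC, hev⟩ := h q.toReal hq0 hq1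
  rw [ENNReal.ofReal_toReal hqt] at hev
  rw [← (tendsto_exponent (Real.log C) α).limsup_eq]
  refine limsup_le_limsup ?_
  filter_upwards [hev, eventually_ge_atTop 2] with n hn hn2
  obtain ⟨S, t, ht, hp⟩ := hn
  have h1 : tauQ r s E q n ≤ (t : ℕ∞) :=
    (iInf_le _ S).trans (sInf_le ⟨t, rfl, hp⟩)
  have hn1 : (1 : ℝ) ≤ n := by exact_mod_cast (by omega : 1 ≤ n)
  have hpow : 1 ≤ (n : ℝ) ^ α := Real.one_le_rpow hn1 hα
  have hlog : 0 ≤ (Real.log n)⁻¹ := inv_nonneg.2 (Real.log_nonneg hn1)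
  have h2 : Real.log t ≤ Real.log C + α * Real.log n := by
    rw [← Real.log_rpow (by linarith), ← Real.log_mul (by linarith) (by linarith)]
    rcases Nat.eq_zero_or_pos t with rfl | ht0
    · simp only [Nat.cast_zero, Real.log_zero]
      exact Real.log_nonneg (by nlinarith)
    · exact Real.log_le_log (by exact_mod_cast ht0) ht
  rw [EReal.coe_mul]
  refine mul_le_mul_of_nonneg_right ((elog_mono h1).trans ?_) (by exact_mod_cast hlog)
  rw [elog_coe]
  exact_mod_cast h2

lemma le_tauExp {V : Type*} (r s : ℕ) (E : Finset (Finset V)) (α c : ℝ) (hc : 0 < c)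
    (h : ∀ᶠ n : ℕ in atTop, ∀ (S : Strategy n r s) (t : ℕ),
      ENNReal.ofReal (1 / 2) ≤ probContains n r s E S t → c * (n : ℝ) ^ α ≤ t) :
    (α : EReal) ≤ tauExp r s E := by
  unfold tauExp
  have hmem : ENNReal.ofReal (1 / 2) ∈ Set.Ioo (0 : ℝ≥0∞) 1 := by
    refine ⟨ENNReal.ofReal_pos.2 (by norm_num), ?_⟩
    rw [← ENNReal.ofReal_one]
    exact (ENNReal.ofReal_lt_ofReal_iff (by norm_num)).2 (by norm_num)
  refine le_trans ?_ (le_iSup₂ (f := fun (q : ℝ≥0∞) (_ : q ∈ Set.Ioo (0 : ℝ≥0∞) 1) =>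
    Filter.limsup (fun n : ℕ => elog (tauQ r s E q n) * (((Real.log n)⁻¹ : ℝ) : EReal)) atTop)
    (ENNReal.ofReal (1 / 2)) hmem)
  rw [← (tendsto_exponent (Real.log c) α).limsup_eq]
  refine limsup_le_limsup ?_
  filter_upwards [h, eventually_ge_atTop 2] with n hn hn2
  have h1 : ((⌈c * (n : ℝ) ^ α⌉₊ : ℕ) : ℕ∞) ≤ tauQ r s E (ENNReal.ofReal (1 / 2)) n := by
    refine le_iInf fun S => le_sInf ?_
    rintro _ ⟨t, rfl, ht⟩
    have := Nat.ceil_le.2 (hn S t ht)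
    exact_mod_cast this
  have hn1 : (1 : ℝ) ≤ n := by exact_mod_cast (by omega : 1 ≤ n)
  have hpow : 0 < (n : ℝ) ^ α := Real.rpow_pos_of_pos (by linarith) α
  have hlog : 0 ≤ (Real.log n)⁻¹ := inv_nonneg.2 (Real.log_nonneg hn1)
  rw [EReal.coe_mul]
  refine mul_le_mul_of_nonneg_right (le_trans ?_ (elog_mono h1)) (by exact_mod_cast hlog)
  rw [elog_coe, EReal.coe_le_coe_iff, ← Real.log_rpow (by linarith),
    ← Real.log_mul hc.ne' hpow.ne']
  exact Real.log_le_log (by positivity) (Nat.le_ceil _)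

lemma tauExp_nonneg {V : Type*} (r s : ℕ) (E : Finset (Finset V)) : 0 ≤ tauExp r s E := by
  have hmem : ENNReal.ofReal (1 / 2) ∈ Set.Ioo (0 : ℝ≥0∞) 1 := by
    refine ⟨ENNReal.ofReal_pos.2 (by norm_num), ?_⟩
    rw [← ENNReal.ofReal_one]
    exact (ENNReal.ofReal_lt_ofReal_iff (by norm_num)).2 (by norm_num)
  refine le_trans ?_ (le_iSup₂ (f := fun (q : ℝ≥0∞) (_ : q ∈ Set.Ioo (0 : ℝ≥0∞) 1) =>
    Filter.limsup (fun n : ℕ => elog (tauQ r s E q n) * (((Real.log n)⁻¹ : ℝ) : EReal)) atTop)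
    (ENNReal.ofReal (1 / 2)) hmem)
  refine le_limsup_of_frequently_le ?_
  refine (Eventually.frequently ?_)
  filter_upwards [eventually_ge_atTop 2] with n hn2
  have hn1 : (1 : ℝ) ≤ n := by exact_mod_cast (by omega : 1 ≤ n)
  have hlog : 0 ≤ (Real.log n)⁻¹ := inv_nonneg.2 (Real.log_nonneg hn1)
  exact mul_nonneg (elog_nonneg _) (by exact_mod_cast hlog)

/-! ### Part (ii) -/

lemma part_ii (s ℓ m r : ℕ) (hℓ : 2 ≤ ℓ) (hm : 3 ≤ m) (hs : 2 * ℓ ≤ s) (hrs : r ≤ s)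
    (h : s - 2 * ℓ + 1 ≤ r) :
    ((((r : ℝ) - s + 2 * ℓ) / 3 : ℝ) : EReal) ≤ tauExp r s (looseCycle s ℓ m) := by
  obtain ⟨a, ha⟩ : ∃ a, a = r + 2 * ℓ - s := ⟨_, rfl⟩
  have haR : ((r : ℝ) - s + 2 * ℓ) = a := by
    have : a + s = r + 2 * ℓ := by omega
    have : (a : ℝ) + s = r + 2 * ℓ := by exact_mod_cast this
    linarith
  rw [haR]
  have hK := KK_pos r
  have hs0 : (0 : ℝ) < s := by exact_mod_cast (by omega : 0 < s)
  set B : ℝ := 2 * (KK r * (2 * s) ^ a) with hB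
  have hB0 : 0 < B := by positivity
  refine le_tauExp r s _ _ ((B⁻¹) ^ (1 / 3 : ℝ)) (by positivity) ?_
  filter_upwards [eventually_ge_atTop (2 * r + 1)] with n hn S t ht
  have hn0 : (0 : ℝ) < n := by exact_mod_cast (by omega : 0 < n)
  have h1 := ht.trans (lower_prob s ℓ m r n (by omega) hm hs hrs (by omega) (by omega) S t)
  rw [ENNReal.ofReal_le_ofReal_iff (by positivity), ← ha, div_pow] at h1
  have h2 : B⁻¹ * (n : ℝ) ^ a ≤ (t : ℝ) ^ 3 := by
    rw [inv_mul_le_iff₀ hB0, hB]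
    have h3 : (t : ℝ) ^ 3 * (KK r * ((2 * s) ^ a / (n : ℝ) ^ a)) =
      ((t : ℝ) ^ 3 * (KK r * (2 * s) ^ a)) / (n : ℝ) ^ a := by ring
    rw [h3, le_div_iff₀ (by positivity)] at h1
    linarith
  have h4 : (B⁻¹) ^ (1 / 3 : ℝ) * (n : ℝ) ^ ((a : ℝ) / 3) = (B⁻¹ * (n : ℝ) ^ a) ^ (1 / 3 : ℝ) := by
    rw [Real.mul_rpow (by positivity) (by positivity), ← Real.rpow_natCast_mul (by positivity)]
    congr 2; ring
  rw [h4]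
  calc (B⁻¹ * (n : ℝ) ^ a) ^ (1 / 3 : ℝ) ≤ ((t : ℝ) ^ 3) ^ (1 / 3 : ℝ) :=
        Real.rpow_le_rpow (by positivity) h2 (by norm_num)
    _ = t := by
        rw [← Real.rpow_natCast_mul (by positivity)]
        norm_num

/-! ### Values under optimal play -/

open Classical in
lemma step_count {n r s : ℕ} (hrn : 2 * r ≤ n) (hn : 0 < n) (hr : 1 ≤ r) (z : ℕ) (δ : ℝ)
    (hδ : KK r * ((z : ℝ) / n) ≤ δ) (h : List (Step n r s)) (G : List (Step n r s) → Prop)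
    (hZ : ∃ Z : Finset (Fin n), Z.card ≤ z ∧ ∀ U : Col n r, Disjoint U.1 Z → ∃ V, G ((U, V) :: h)) :
    (1 - δ) * (Fintype.card (Col n r) : ℝ) ≤
      ((Finset.univ.filter fun U : Col n r => ∃ V, G ((U, V) :: h)).card : ℝ) := by
  obtain ⟨Z, hz, hG⟩ := hZ
  have hK := KK_pos r
  have h1 := count_avoid n r hrn hn hr Z
  have h2 : ((Finset.univ.filter fun U : Col n r => Disjoint U.1 Z).card : ℝ) ≤
      ((Finset.univ.filter fun U : Col n r => ∃ V, G ((U, V) :: h)).card : ℝ) := by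
    have : (Finset.univ.filter fun U : Col n r => Disjoint U.1 Z).card ≤
      (Finset.univ.filter fun U : Col n r => ∃ V, G ((U, V) :: h)).card := by
      refine Finset.card_le_card fun U hU => ?_
      exact Finset.mem_filter.2 ⟨Finset.mem_univ _, hG U (Finset.mem_filter.1 hU).2⟩
    exact_mod_cast this
  refine le_trans ?_ (h1.trans h2)
  refine mul_le_mul_of_nonneg_right ?_ (by positivity)
  have h3 : KK r * ((Z.card : ℝ) / n) ≤ KK r * ((z : ℝ) / n) := by
    have : (Z.card : ℝ) ≤ z := by exact_mod_cast hz
    gcongr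
  linarith

lemma value_i (s ℓ m r n : ℕ) (hℓ : 2 ≤ ℓ) (hm : 3 ≤ m) (hs : 2 * ℓ ≤ s) (hr2 : 1 ≤ r)
    (hr : r ≤ s - 2 * ℓ) (hn : 2 * m * s + s ≤ n) (δ : ℝ)
    (hδ : KK r * (((2 * m * s : ℕ) : ℝ) / n) ≤ δ) (hδ1 : δ ≤ 1) :
    (1 - δ) ^ m ≤ Wv (ContainsCopy (n := n) (r := r) (s := s) (looseCycle s ℓ m)) m [] := by
  have hK := KK_pos r
  have hms : m * s ≤ 2 * m * s := by rw [mul_assoc]; omega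
  have hms3 : 3 * s ≤ m * s := Nat.mul_le_mul_right _ hm
  have hmℓ : m * ℓ ≤ m * s := Nat.mul_le_mul_left _ (by omega)
  have h := levels (ContainsCopy (n := n) (r := r) (s := s) (looseCycle s ℓ m))
    (contains_mono _) (col_nonempty (by omega)) (col_nonempty (by omega))
    (fun k h => StI ℓ m k h) 0 1 1 δ zero_le_one (le_trans (by positivity) hδ) hδ1 m
    (fun h hG => by
      rw [Wv, if_pos (StI_final ℓ m (by omega) hm hs (by omega) h hG)])
    (fun k hk h hG => step_count (by omega) (by omega) hr2 (2 * m * s) δ hδ h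
      (fun h => StI ℓ m (k + 1) h) (StI_step ℓ m k hm hs hr hk hn h hG)) []
    (StI_init ℓ m (by omega))
  simpa using h

open Classical in
lemma final_count (s ℓ k r n N : ℕ) (hℓ : 2 ≤ ℓ) (hs : 2 * ℓ ≤ s)
    (hr : r = s - 2 * ℓ + 2) (hN : 1 ≤ N) (hn : 4 * ((2 * k + 4) * s * N) ≤ n)
    (h : List (Step n r s)) (hst : FamSt ℓ k N N h) :
    ((N : ℝ) ^ 2 / n ^ 2 * (1 / (4 ^ (r - 2) * (r - 2).factorial))) *
      (Fintype.card (Col n r) : ℝ) ≤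
      ((Finset.univ.filter fun U : Col n r => ∃ V,
        ContainsCopy (looseCycle s ℓ (k + 3)) ((U, V) :: h)).card : ℝ) := by
  obtain ⟨D, B₁, B₂, X₁, X₂, hPD, hc₁, hc₂, hB₁, hB₂, hX₁, hX₂, hXc₁, hXc₂, hF₁, hF₂⟩ := hst
  have hZ := card_allZ hs hPD hc₁ hc₂ hXc₁ hXc₂
  have hb : (2 * k + 2) * s + r * N + r * N ≤ (2 * k + 4) * s * N := by
    have h1 : (2 * k + 2) * s ≤ (2 * k + 2) * s * N := Nat.le_mul_of_pos_right _ hN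
    have h2 : r * N ≤ s * N := Nat.mul_le_mul_right _ (by omega)
    calc _ ≤ (2 * k + 2) * s * N + s * N + s * N := by omega
      _ = _ := by ring
  have hsb : 4 * s ≤ (2 * k + 4) * s * N := by
    calc 4 * s ≤ (2 * k + 4) * s := Nat.mul_le_mul_right _ (by omega)
      _ ≤ _ := Nat.le_mul_of_pos_right _ hN
  set b := (2 * k + 4) * s * N with hbdef
  set Z := allZ k D B₁ B₂ X₁ X₂ with hZdef
  have hn0 : (0 : ℝ) < n := by exact_mod_cast (by omega : 0 < n)
  have hcd := count_double n r (by omega) X₁ X₂ Z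
    (by rw [hZdef]; unfold allZ; intro v hv; simp [hv])
    (by rw [hZdef]; unfold allZ; intro v hv; simp [hv])
    (Finset.disjoint_union_right.1 hX₂).2.symm
  have hsub : (Finset.univ.filter fun U : Col n r => ∃ x₁ ∈ X₁, ∃ x₂ ∈ X₂, ∃ R : Finset (Fin n),
        Disjoint R Z ∧ U.1 = insert x₁ (insert x₂ R)) ⊆
      (Finset.univ.filter fun U : Col n r => ∃ V,
        ContainsCopy (looseCycle s ℓ (k + 3)) ((U, V) :: h)) := by
    intro U hU
    obtain ⟨x₁, hx₁, x₂, hx₂, R, hR, hUe⟩ := (Finset.mem_filter.1 hU).2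
    exact Finset.mem_filter.2 ⟨Finset.mem_univ _, FamSt_final ℓ k hℓ hs hr (by omega) h D B₁ B₂ X₁ X₂
      hPD hc₁ hc₂ hB₁ hB₂ hX₁ hX₂ hF₁ hF₂ U x₁ x₂ hx₁ hx₂ R hR hUe⟩
  have h1 : ((X₁.card * X₂.card * (n - Z.card).choose (r - 2) : ℕ) : ℝ) ≤
      ((Finset.univ.filter fun U : Col n r => ∃ V,
        ContainsCopy (looseCycle s ℓ (k + 3)) ((U, V) :: h)).card : ℝ) := by
    exact_mod_cast hcd.trans (Finset.card_le_card hsub)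
  refine le_trans ?_ h1
  have h2 := Nat.pow_le_choose (α := ℝ) (r - 2) (n - Z.card)
  have h3 : (n : ℝ) / 4 ≤ ((n - Z.card + 1 - (r - 2) : ℕ) : ℝ) := by
    have : n ≤ 4 * (n - Z.card + 1 - (r - 2)) := by omega
    have : (n : ℝ) ≤ 4 * ((n - Z.card + 1 - (r - 2) : ℕ) : ℝ) := by exact_mod_cast this
    linarith
  have h4 : ((n : ℝ) / 4) ^ (r - 2) / (r - 2).factorial ≤ ((n - Z.card).choose (r - 2) : ℝ) := by
    refine le_trans ?_ h2
    gcongr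
  have h5 : (Fintype.card (Col n r) : ℝ) ≤ (n : ℝ) ^ r := by
    rw [card_Col]; exact_mod_cast Nat.choose_le_pow n r
  have h6 : (n : ℝ) ^ r = n ^ 2 * n ^ (r - 2) := by rw [← pow_add]; congr 1; omega
  have h7 : (N : ℝ) ≤ X₁.card := by
    rw [hXc₁]; exact_mod_cast Nat.le_mul_of_pos_left _ (by omega)
  have h8 : (N : ℝ) ≤ X₂.card := by
    rw [hXc₂]; exact_mod_cast Nat.le_mul_of_pos_left _ (by omega)
  calc ((N : ℝ) ^ 2 / n ^ 2 * (1 / (4 ^ (r - 2) * (r - 2).factorial))) *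
      (Fintype.card (Col n r) : ℝ)
      ≤ ((N : ℝ) ^ 2 / n ^ 2 * (1 / (4 ^ (r - 2) * (r - 2).factorial))) *
        (n ^ 2 * n ^ (r - 2)) := by rw [← h6]; gcongr
    _ = (N : ℝ) * N * (((n : ℝ) / 4) ^ (r - 2) / (r - 2).factorial) := by
        rw [div_pow]; field_simp
    _ ≤ (X₁.card : ℝ) * X₂.card * ((n - Z.card).choose (r - 2) : ℝ) := by gcongr
    _ = _ := by push_cast; ring

lemma value_iii (s ℓ k r n N F : ℕ) (hℓ : 2 ≤ ℓ) (hs : 2 * ℓ ≤ s)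
    (hr : r = s - 2 * ℓ + 2) (hN : 1 ≤ N) (hn : 4 * ((2 * k + 4) * s * N) ≤ n) (δ p : ℝ)
    (hδ : KK r * ((((2 * k + 4) * s * N : ℕ) : ℝ) / n) ≤ δ) (hδ1 : δ ≤ 1)
    (hp : p = (N : ℝ) ^ 2 / n ^ 2 * (1 / (4 ^ (r - 2) * (r - 2).factorial))) (hp1 : p ≤ 1) :
    (1 - δ ^ 3) ^ (k + 2 * N) * (1 - (1 - p) ^ F) ≤
      Wv (ContainsCopy (n := n) (r := r) (s := s) (looseCycle s ℓ (k + 3)))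
        (3 * k + 6 * N + F) [] := by
  classical
  have hK := KK_pos r
  have hb : (2 * k + 2) * s + r * N + r * N ≤ (2 * k + 4) * s * N := by
    have h1 : (2 * k + 2) * s ≤ (2 * k + 2) * s * N := Nat.le_mul_of_pos_right _ hN
    have h2 : r * N ≤ s * N := Nat.mul_le_mul_right _ (by omega)
    calc _ ≤ (2 * k + 2) * s * N + s * N + s * N := by omega
      _ = _ := by ring
  have hsb : (2 * k + 4) * s ≤ (2 * k + 4) * s * N := Nat.le_mul_of_pos_right _ hN
  have hsb' : 4 * s ≤ (2 * k + 4) * s := Nat.mul_le_mul_right _ (by omega)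
  have hkk : ∀ i ≤ k, (2 * i + 1) * s + 3 * s ≤ (2 * k + 4) * s := by
    intro i hi
    rw [← add_mul]; exact Nat.mul_le_mul_right _ (by omega)
  have hδ0 : 0 ≤ δ := le_trans (by positivity) hδ
  have hp0 : 0 ≤ p := by rw [hp]; positivity
  have hU : Nonempty (Col n r) := col_nonempty (by omega)
  have hV : Nonempty (Col n (s - r)) := col_nonempty (by omega)
  have h01 : 0 ≤ 1 - δ ^ 3 := by
    have := pow_le_one₀ (n := 3) hδ0 hδ1
    linarith
  have hw0 : 0 ≤ 1 - (1 - p) ^ F := by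
    have := pow_le_one₀ (n := F) (by linarith : 0 ≤ 1 - p) (by linarith)
    linarith
  set Q := ContainsCopy (n := n) (r := r) (s := s) (looseCycle s ℓ (k + 3)) with hQdef
  have hQ : ∀ h h', h ⊆ h' → Q h → Q h' := contains_mono _
  have st4 : ∀ h, FamSt ℓ k N N h → 1 - (1 - p) ^ F ≤ Wv Q (F + 0) h := by
    intro h hG
    have := retry Q hQ hU hV 0 h 1 (1 - p) zero_le_one (by linarith) (by
      have h1 := final_count s ℓ k r n N hℓ hs hr hN hn h hG
      rw [← hp] at h1
      rw [sub_sub_cancel]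
      refine h1.trans ?_
      have : (Finset.univ.filter fun U : Col n r => ∃ V,
        ContainsCopy (looseCycle s ℓ (k + 3)) ((U, V) :: h)).card ≤
        (Finset.univ.filter fun U : Col n r => ∃ V, 1 ≤ Wv Q 0 ((U, V) :: h)).card := by
        refine Finset.card_le_card fun U hU => ?_
        obtain ⟨V, hV⟩ := (Finset.mem_filter.1 hU).2
        refine Finset.mem_filter.2 ⟨Finset.mem_univ _, V, ?_⟩
        rw [Wv, if_pos hV]
      exact_mod_cast this) F
    simpa using this
  have st3 := levels Q hQ hU hV (fun i h => FamSt ℓ k N i h) (F + 0) 3 _ δ hw0 hδ0 hδ1 N st4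
    (fun i hi h hG => step_count (by omega) (by omega) (by omega) _ δ hδ h
      (fun h => FamSt ℓ k N (i + 1) h) (by
        obtain ⟨Z, hZ, hG'⟩ := FamSt_step₂ ℓ k N i hℓ hs hr h hG
        have : r * i ≤ r * N := Nat.mul_le_mul_left _ hi.le
        exact ⟨Z, by omega, hG'⟩))
  have st2 := levels Q hQ hU hV (fun i h => FamSt ℓ k i 0 h) _ 3 _ δ (by positivity) hδ0 hδ1 N st3
    (fun i hi h hG => step_count (by omega) (by omega) (by omega) _ δ hδ h
      (fun h => FamSt ℓ k (i + 1) 0 h) (by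
        obtain ⟨Z, hZ, hG'⟩ := FamSt_step₁ ℓ k i 0 hℓ hs hr h hG
        have : r * i ≤ r * N := Nat.mul_le_mul_left _ hi.le
        exact ⟨Z, by omega, hG'⟩))
  have st1 := levels Q hQ hU hV (fun i h => PathSt ℓ i h) _ 3 _ δ (by positivity) hδ0 hδ1 k
    (fun h hG => st2 h (FamSt_init ℓ k hs (by have := hkk k le_rfl; omega) h hG))
    (fun i hi h hG => step_count (by omega) (by omega) (by omega) _ δ hδ h
      (fun h => PathSt ℓ (i + 1) h) (by
        have := hkk i hi.le
        obtain ⟨Z, hZ, hG'⟩ := PathSt_step ℓ i hℓ hs hr (by omega) h hG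
        exact ⟨Z, by omega, hG'⟩)) [] (PathSt_init ℓ (by omega))
  rw [show k * 3 + (N * 3 + (N * 3 + (F + 0))) = 3 * k + 6 * N + F by ring] at st1
  refine le_trans (le_of_eq ?_) st1
  ring

end SemiRandomHypergraph

namespace SemiRandomHypergraph

/-! ### Final assembly -/

lemma strategy_of_value {V : Type*} (n r s t : ℕ) (E : Finset (Finset V)) (hr : r ≤ n)
    (hs : s ≤ n) (q : ℝ)
    (h : q ≤ Wv (ContainsCopy (n := n) (r := r) (s := s) E) t []) :
    ∃ S : Strategy n r s, ENNReal.ofReal q ≤ probContains n r s E S t := by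
  obtain ⟨S, hS⟩ := exists_strategy (ContainsCopy (n := n) (r := r) (s := s) E)
    (col_nonempty hr) (col_nonempty (by omega)) t
  refine ⟨S, (ENNReal.ofReal_le_ofReal h).trans ?_⟩
  unfold probContains
  rw [dif_pos hr]
  exact hS

lemma part_i (s ℓ m r : ℕ) (hℓ : 2 ≤ ℓ) (hm : 3 ≤ m) (hs : 2 * ℓ ≤ s) (hr2 : 1 ≤ r)
    (hr : r ≤ s - 2 * ℓ) : tauExp r s (looseCycle s ℓ m) = (0 : EReal) := by
  refine le_antisymm ?_ (tauExp_nonneg _ _ _)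
  have := tauExp_le r s (looseCycle s ℓ m) 0 le_rfl ?_
  · simpa using this
  intro q hq0 hq1
  have hm1 : (3 : ℝ) ≤ m := by exact_mod_cast hm
  refine ⟨m, by linarith, ?_⟩
  have hK := KK_pos r
  have hlim : Tendsto (fun n : ℕ => KK r * (((2 * m * s : ℕ) : ℝ) / n)) atTop (nhds (KK r * 0)) :=
    (tendsto_const_div_atTop_nhds_zero_nat _).const_mul _
  rw [mul_zero] at hlim
  have hpos : 0 < (1 - q) / m := by
    apply div_pos <;> linarith
  filter_upwards [hlim.eventually_lt_const hpos, eventually_ge_atTop (2 * m * s + s)] with n h1 h2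
  have hle : (1 - q) / m ≤ 1 := by
    rw [div_le_one (by linarith)]; linarith
  have hv := value_i s ℓ m r n hℓ hm hs hr2 hr h2 ((1 - q) / m) h1.le hle
  have hb := one_add_mul_le_pow (a := -((1 - q) / m)) (by linarith) m
  have e : 1 + (m : ℝ) * -((1 - q) / m) = q := by
    field_simp; ring
  rw [e, ← sub_eq_add_neg] at hb
  obtain ⟨S, hS⟩ := strategy_of_value n r s m (looseCycle s ℓ m) (by omega) (by omega) q (hb.trans hv)
  exact ⟨S, m, by simp, hS⟩

set_option maxHeartbeats 2000000 in
lemma part_iii_upper (s ℓ k r : ℕ) (hℓ : 2 ≤ ℓ) (hs : 2 * ℓ ≤ s)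
    (hr : r = s - 2 * ℓ + 2) :
    tauExp r s (looseCycle s ℓ (k + 3)) ≤ ((2 / 3 : ℝ) : EReal) := by
  refine tauExp_le r s _ (2 / 3) (by norm_num) ?_
  intro q hq0 hq1
  obtain ⟨c, hc⟩ : ∃ c : ℝ, c = 1 / (4 ^ (r - 2) * (r - 2).factorial) := ⟨_, rfl⟩
  have hc0 : 0 < c := by rw [hc]; positivity
  have hc1 : c ≤ 1 := by
    rw [hc, div_le_one (by positivity)]
    have h1 : (1 : ℝ) ≤ 4 ^ (r - 2) := one_le_pow₀ (by norm_num)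
    have h2 : (1 : ℝ) ≤ (r - 2).factorial := by exact_mod_cast Nat.factorial_pos _
    nlinarith
  obtain ⟨K, hK⟩ : ∃ K : ℕ, Real.exp (-(c * K)) ≤ (1 - q) / 2 := by
    have hl : Tendsto (fun K : ℕ => Real.exp (-(c * K))) atTop (nhds 0) :=
      Real.tendsto_exp_neg_atTop_nhds_zero.comp
        (tendsto_natCast_atTop_atTop.const_mul_atTop hc0)
    exact ((hl.eventually_lt_const (show (0 : ℝ) < (1 - q) / 2 by linarith)).exists).imp
      fun _ h => h.le
  refine ⟨(3 * k + 6 + K) * 2, by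
    have : (0 : ℝ) ≤ k := Nat.cast_nonneg k
    have : (0 : ℝ) ≤ K := Nat.cast_nonneg K
    linarith, ?_⟩
  obtain ⟨b, hb⟩ : ∃ b : ℕ, b = (2 * k + 4) * s := ⟨_, rfl⟩
  have hb1 : s ≤ b := by rw [hb]; exact Nat.le_mul_of_pos_left _ (by omega)
  have hKK := KK_pos r
  obtain ⟨D, hD⟩ : ∃ D : ℝ, D = 2 * KK r * b := ⟨_, rfl⟩
  have hD0 : 0 ≤ D := by rw [hD]; positivity
  have hx : Tendsto (fun n : ℕ => (n : ℝ) ^ (1 / 3 : ℝ)) atTop atTop :=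
    (tendsto_rpow_atTop (by norm_num)).comp tendsto_natCast_atTop_atTop
  filter_upwards [hx.eventually_ge_atTop 1, hx.eventually_ge_atTop (8 * b), hx.eventually_ge_atTop D,
    hx.eventually_ge_atTop (((k : ℝ) + 4) * D ^ 3 * (2 / (1 - q)))] with n h1 h2 h3 h4
  obtain ⟨x, hxd⟩ : ∃ x : ℝ, x = (n : ℝ) ^ (1 / 3 : ℝ) := ⟨_, rfl⟩
  rw [← hxd] at h1 h2 h3 h4
  have hn0 : (0 : ℝ) ≤ n := Nat.cast_nonneg n
  have hx3 : (n : ℝ) = x ^ 3 := by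
    rw [hxd, ← Real.rpow_natCast, ← Real.rpow_mul hn0]; norm_num
  have hx2 : (n : ℝ) ^ (2 / 3 : ℝ) = x ^ 2 := by
    rw [hxd, ← Real.rpow_natCast, ← Real.rpow_mul hn0]; norm_num
  have hxp : 0 < x := by linarith
  have hx21 : 1 ≤ x ^ 2 := one_le_pow₀ h1
  obtain ⟨N, hN⟩ : ∃ N : ℕ, N = ⌈x ^ 2⌉₊ := ⟨_, rfl⟩
  have hNl : x ^ 2 ≤ N := by rw [hN]; exact Nat.le_ceil _
  have hNu : (N : ℝ) ≤ 2 * x ^ 2 := by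
    have := Nat.ceil_lt_add_one (show 0 ≤ x ^ 2 by positivity)
    rw [← hN] at this; linarith
  have hN1 : 1 ≤ N := by
    have : (1 : ℝ) ≤ N := hx21.trans hNl
    exact_mod_cast this
  have hnb : 4 * (b * N) ≤ n := by
    have : (4 : ℝ) * (b * N) ≤ n := by
      rw [hx3]
      have hb0 : (0 : ℝ) ≤ b := Nat.cast_nonneg b
      calc (4 : ℝ) * (b * N) ≤ 4 * (b * (2 * x ^ 2)) := by gcongr
        _ = (8 * b) * x ^ 2 := by ring
        _ ≤ x * x ^ 2 := by gcongr
        _ = x ^ 3 := by ring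
    exact_mod_cast this
  have hbN : b ≤ b * N := Nat.le_mul_of_pos_right _ hN1
  have hNb : N ≤ b * N := Nat.le_mul_of_pos_left _ (by omega)
  have hδ : KK r * (((b * N : ℕ) : ℝ) / n) ≤ D / x := by
    rw [hx3, hD]; push_cast
    calc KK r * ((b * N : ℝ) / x ^ 3) ≤ KK r * ((b * (2 * x ^ 2) : ℝ) / x ^ 3) := by gcongr
      _ = 2 * KK r * b / x := by field_simp
  have hδ0 : 0 ≤ D / x := by positivity
  have hδ1 : D / x ≤ 1 := by rw [div_le_one hxp]; exact h3
  have hNn : (N : ℝ) ≤ n := by exact_mod_cast (by omega : N ≤ n)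
  have hnpos : (0 : ℝ) < n := by rw [hx3]; positivity
  obtain ⟨p, hp⟩ : ∃ p : ℝ, p = (N : ℝ) ^ 2 / n ^ 2 * c := ⟨_, rfl⟩
  have hp0 : 0 ≤ p := by rw [hp]; positivity
  have hp1 : p ≤ 1 := by
    rw [hp]
    refine mul_le_one₀ ?_ hc0.le hc1
    rw [div_le_one (by positivity)]
    gcongr
  subst hb
  have hv := value_iii s ℓ k r n N (K * N) hℓ hs hr hN1 hnb (D / x) p hδ hδ1 (by rw [hp, hc]) hp1
  -- first factor
  have hA : 1 - (1 - q) / 2 ≤ (1 - (D / x) ^ 3) ^ (k + 2 * N) := by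
    have hcube : (D / x) ^ 3 ≤ 1 := pow_le_one₀ hδ0 hδ1
    have hb := one_add_mul_le_pow (a := -((D / x) ^ 3)) (by linarith) (k + 2 * N)
    rw [← sub_eq_add_neg] at hb
    refine le_trans ?_ hb
    have h5 : ((k + 2 * N : ℕ) : ℝ) ≤ (k + 4) * x ^ 2 := by
      push_cast
      have : (k : ℝ) * 1 ≤ k * x ^ 2 := by gcongr
      nlinarith
    have h6 : ((k + 2 * N : ℕ) : ℝ) * (D / x) ^ 3 ≤ (1 - q) / 2 := by
      calc ((k + 2 * N : ℕ) : ℝ) * (D / x) ^ 3 ≤ ((k + 4) * x ^ 2) * (D / x) ^ 3 := by gcongr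
        _ = (((k : ℝ) + 4) * D ^ 3) / x := by field_simp
        _ ≤ (1 - q) / 2 := by
          rw [div_le_iff₀ hxp]
          have hq2 : (0 : ℝ) < 1 - q := by linarith
          have := mul_le_mul_of_nonneg_left h4 (by linarith : 0 ≤ (1 - q) / 2)
          calc ((k : ℝ) + 4) * D ^ 3 = (1 - q) / 2 * (((k : ℝ) + 4) * D ^ 3 * (2 / (1 - q))) := by
                field_simp
            _ ≤ _ := this
    linarith
  have hB : (1 - p) ^ (K * N) ≤ (1 - q) / 2 := by
    refine le_trans ?_ hK
    calc (1 - p) ^ (K * N) ≤ Real.exp (-p) ^ (K * N) :=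
          pow_le_pow_left₀ (by linarith) (Real.one_sub_le_exp_neg p) _
      _ = Real.exp (((K * N : ℕ) : ℝ) * -p) := (Real.exp_nat_mul _ _).symm
      _ ≤ Real.exp (-(c * K)) := by
        apply Real.exp_le_exp.2
        have hN3 : (1 : ℝ) ≤ (N : ℝ) ^ 3 / n ^ 2 := by
          rw [le_div_iff₀ (by positivity), one_mul, hx3]
          calc (x ^ 3) ^ 2 = (x ^ 2) ^ 3 := by ring
            _ ≤ (N : ℝ) ^ 3 := by gcongr
        have e : ((K * N : ℕ) : ℝ) * -p = -(c * K * ((N : ℝ) ^ 3 / n ^ 2)) := by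
          rw [hp]; push_cast; ring
        rw [e]
        have : c * K * 1 ≤ c * K * ((N : ℝ) ^ 3 / n ^ 2) := by gcongr
        linarith
  have hq : q ≤ (1 - (D / x) ^ 3) ^ (k + 2 * N) * (1 - (1 - p) ^ (K * N)) := by
    calc q ≤ (1 - (1 - q) / 2) * (1 - (1 - q) / 2) := by nlinarith [sq_nonneg (1 - q)]
      _ ≤ _ := by
        apply mul_le_mul hA (by linarith) (by linarith)
        exact le_trans (by linarith) hA
  obtain ⟨S, hS⟩ := strategy_of_value n r s (3 * k + 6 * N + K * N) (looseCycle s ℓ (k + 3))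
    (by omega) (by omega) q (hq.trans hv)
  refine ⟨S, _, ?_, hS⟩
  rw [hx2]
  push_cast
  have t1 : (k : ℝ) * 1 ≤ k * x ^ 2 := by gcongr
  have t2 : (K : ℝ) * N ≤ K * (2 * x ^ 2) := by gcongr
  nlinarith [Nat.cast_nonneg (α := ℝ) k]

end SemiRandomHypergraph

open SemiRandomHypergraph in
/-- **Proposition 11 (loose cycles).** Let `ℓ ≥ 2`, `m ≥ 3`, `s ≥ 2ℓ`, `2 ≤ r ≤ s - ℓ`,
and let `G = C_m^{(s,ℓ)}`. Then (i) if `r ≤ s - 2ℓ` then `τ^{(r)}_{P_G} = 0`;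
(ii) if `r ≥ s - 2ℓ + 1` then `τ^{(r)}_{P_G} ≥ (r-s+2ℓ)/3`;
(iii) if `r = s - 2ℓ + 2` then `τ^{(r)}_{P_G} = 2/3`. -/
theorem semiRandom_hypergraph_loose_cycle
    (s ℓ m r : ℕ) (hℓ : 2 ≤ ℓ) (hm : 3 ≤ m) (hs : 2 * ℓ ≤ s)
    (hr2 : 2 ≤ r) (hr : r ≤ s - ℓ) :
    (r ≤ s - 2 * ℓ → tauExp r s (looseCycle s ℓ m) = (0 : EReal)) ∧
    (s - 2 * ℓ + 1 ≤ r →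
      ((((r : ℝ) - s + 2 * ℓ) / 3 : ℝ) : EReal) ≤ tauExp r s (looseCycle s ℓ m)) ∧
    (r = s - 2 * ℓ + 2 → tauExp r s (looseCycle s ℓ m) = ((2 / 3 : ℝ) : EReal)) := by
  refine ⟨fun h => part_i s ℓ m r hℓ hm hs (by omega) h,
    fun h => part_ii s ℓ m r hℓ hm hs (by omega) h, fun h => le_antisymm ?_ ?_⟩
  · obtain ⟨k, rfl⟩ : ∃ k, m = k + 3 := ⟨m - 3, by omega⟩
    exact part_iii_upper s ℓ k r hℓ hs h
  · have h2 := part_ii s ℓ m r hℓ hm hs (by omega) (by omega)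
    have e : ((r : ℝ) - s + 2 * ℓ) = 2 := by
      have h3 : r + 2 * ℓ = s + 2 := by omega
      have h4 : (r : ℝ) + 2 * ℓ = s + 2 := by exact_mod_cast h3
      linarith
    rw [e] at h2
    exact h2
end
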